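/- Let Ω ⊂ ℝ^d be compact and 0 < α < 1. If a sequence (ρⁿ,qⁿ) in 𝒟 (pairs satisfying the continuity equation ∂_t ρ + div_x q = 0 with no-flux boundary conditions) τ-converges to (ρ,q), then ℱ(ρ,q) ≤ liminf_{n→∞} ℱ(ρⁿ,qⁿ), where ℱ(ρ,q) = ∫₀¹ F(ρ_t,q_t) dt. -/

import Mathlib

/-!
Where it is finite, `F(ρ, q)` equals `∫ ρ({x})^(α-1) d|q|(x)`, with `0^(α-1) = ∞`. Hence `F(ρ, q)`
is the supremum of the pairings `∫ ψ · dq` over continuous fields `ψ` with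
`|ψ(x)| ≤ ρ({x})^(α-1)`. The point masses `ρ({x})` are not continuous in `ρ`, so they are replaced
by the smoothed masses `∫ exp(-k|x-y|²) dρ(y)`, which decrease to `ρ({x})` as `k → ∞`; a field whose
norm is bounded through the smoothed masses is called admissible (`Adm`). Both halves of the duality
are used: `ofReal_pairing_le_Fc` bounds pairings by `F`, and `Fc_le_of_adm` recovers `F` from
countably many admissible fields, by Fatou's lemma in `k`.

The bound `sup F(ρⁿₜ, qⁿₜ) < ∞` makes the pairings `∫ ψ · dqⁿₜ` uniformly bounded in `n` and `t`, so
they converge weakly in time even against indicators of measurable sets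
(`tendsto_setIntegral_pairing`). Through the continuity equation, `t ↦ ∫ η dρⁿₜ` is a primitive of
such a pairing, so `ρⁿₜ` converges to `ρₜ` at every time and the smoothed masses converge uniformly
on `Ω` (`eventually_gconc_le`). A field admissible for `ρₜ` therefore eventually satisfies the
constraint `|ψ(x)| ≤ ρⁿₜ({x})^(α-1)` (`adm_mass`), outside a set of times of vanishing measure.

This yields, for each fixed field and each measurable set `A` of times, the lower semicontinuity of
the part of `F` seen by that field on `A` (`lscOn_pairing`). Localization in `A` allows passing to
the supremum over countably many fields (`LscOn.iSup`), and that supremum dominates `F(ρₜ, qₜ)`.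
-/

open MeasureTheory Set Filter
open scoped NNReal ENNReal Classical

/-- Euclidean space `ℝ^d`. -/
abbrev Euc (d : ℕ) := EuclideanSpace ℝ (Fin d)

/-- Integral of a function against a signed measure, via the Jordan decomposition. -/
noncomputable def sInt {E : Type*} [MeasurableSpace E] (f : E → ℝ) (s : SignedMeasure E) :
    ℝ :=
  ∫ x, f x ∂s.toJordanDecomposition.posPart -
    ∫ x, f x ∂s.toJordanDecomposition.negPart

/-- The concentration functional `G_α(λ) = ∑ᵢ |λᵢ|^α` if `λ = ∑ᵢ λᵢ δ_{xᵢ}` is purely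
atomic, and `+∞` otherwise. -/
noncomputable def Ga {E : Type*} [MeasurableSpace E] (α : ℝ) (μ : Measure E) : ℝ≥0∞ :=
  if ∃ s : Set E, s.Countable ∧ μ sᶜ = 0 then
    ∑' x : {x : E // μ {x} ≠ 0}, μ {x.1} ^ α
  else ⊤

/-- The branched-transport integrand `F(ρ,q) = G_α(|v|^{1/α}·ρ)` if `q = v·ρ` is
absolutely continuous with respect to `ρ` with (vector) density `v`, and `+∞` otherwise
(the infimum over an empty family being `+∞`; the density is `ρ`-a.e. unique, so all
representatives give the same value). -/
noncomputable def Fc {d : ℕ} (α : ℝ) (ρ : Measure (Euc d))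
    (q : Fin d → SignedMeasure (Euc d)) : ℝ≥0∞ :=
  ⨅ v ∈ {v : Euc d → Euc d |
      (∀ i, Integrable (fun x => v x i) ρ) ∧
      ∀ i, ∀ s : Set (Euc d), MeasurableSet s → q i s = ∫ x in s, v x i ∂ρ},
    Ga α (ρ.withDensity fun x => ENNReal.ofReal (‖v x‖ ^ (1 / α)))

/-- Total variation of the `ℝ^m`-valued measure `σ` (given through its `m` signed-measure
components): the supremum over finite measurable partitions of the sums of the Euclidean
norms of the values of `σ`. -/
noncomputable def tvVec {m : ℕ} {E : Type*} [MeasurableSpace E]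
    (σ : Fin m → SignedMeasure E) : ℝ≥0∞ :=
  ⨆ (n : ℕ) (A : Fin n → Set E) (_ : ∀ k, MeasurableSet (A k))
    (_ : Pairwise (Function.onFun Disjoint A)),
    ∑ k, ENNReal.ofReal (Real.sqrt (∑ i, σ i (A k) ^ 2))

/-- The continuity equation `∂ₜρ + div_x q = 0` on `[0,1] × Ω` with no-flux boundary
conditions, in the sense of distributions: for every `C¹` test function `φ(t,x)` vanishing
at `t = 0` and `t = 1`, `∫₀¹ [∫ ∂ₜφ dρₜ + ∫ D_xφ · dqₜ] dt = 0`. -/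
noncomputable def ContEq {d : ℕ} (ρ : ℝ → Measure (Euc d))
    (q : ℝ → Fin d → SignedMeasure (Euc d)) : Prop :=
  ∀ φ : ℝ × Euc d → ℝ, ContDiff ℝ 1 φ → (∀ x, φ (0, x) = 0) → (∀ x, φ (1, x) = 0) →
    (∫ t in (0:ℝ)..1,
      ((∫ x, fderiv ℝ φ (t, x) ((1 : ℝ), (0 : Euc d)) ∂(ρ t)) +
        ∑ i, sInt (fun x => fderiv ℝ φ (t, x) ((0 : ℝ), EuclideanSpace.single i 1))
          (q t i))) = 0

/-- The class `𝒟`: pairs `(ρ, q)` with `ρ ∈ C([0,1]; 𝒫(Ω))` (probability measures on `Ω`,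
weakly* continuous in time) and `q ∈ L¹([0,1]; ℳ(Ω; ℝ^d))`, satisfying the continuity
equation with no-flux boundary conditions. -/
def MemD {d : ℕ} (Ω : Set (Euc d)) (ρ : ℝ → Measure (Euc d))
    (q : ℝ → Fin d → SignedMeasure (Euc d)) : Prop :=
  (∀ t ∈ Icc (0:ℝ) 1, IsProbabilityMeasure (ρ t) ∧ ρ t Ωᶜ = 0) ∧
  (∀ f : Euc d → ℝ, Continuous f →
    ContinuousOn (fun t => ∫ x, f x ∂(ρ t)) (Icc 0 1)) ∧
  (∀ t ∈ Icc (0:ℝ) 1, ∀ i,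
    (q t i).toJordanDecomposition.posPart Ωᶜ = 0 ∧
    (q t i).toJordanDecomposition.negPart Ωᶜ = 0) ∧
  (∀ i, ∀ s : Set (Euc d), MeasurableSet s → Measurable fun t => q t i s) ∧
  (∫⁻ t in Icc (0:ℝ) 1, tvVec (q t)) < ⊤ ∧
  ContEq ρ q

/-- The branched transport functional `ℱ(ρ,q) = ∫₀¹ F(ρₜ,qₜ) dt`. -/
noncomputable def BigF {d : ℕ} (α : ℝ) (ρ : ℝ → Measure (Euc d))
    (q : ℝ → Fin d → SignedMeasure (Euc d)) : ℝ≥0∞ :=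
  ∫⁻ t in Icc (0:ℝ) 1, Fc α (ρ t) (q t)

/-- `τ`-convergence of a sequence `(ρⁿ,qⁿ)` to `(ρ,q)`: weak* convergence of the pairs as
measures on `[0,1] × Ω`, together with `sup { F(ρⁿₜ,qⁿₜ) : n ∈ ℕ, t ∈ [0,1] } < +∞`. -/
def TauConv {d : ℕ} (α : ℝ) (ρn : ℕ → ℝ → Measure (Euc d))
    (qn : ℕ → ℝ → Fin d → SignedMeasure (Euc d))
    (ρ : ℝ → Measure (Euc d)) (q : ℝ → Fin d → SignedMeasure (Euc d)) : Prop :=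
  (∀ φ : ℝ × Euc d → ℝ, Continuous φ →
    Tendsto (fun n => ∫ t in (0:ℝ)..1, ∫ x, φ (t, x) ∂(ρn n t)) atTop
      (nhds (∫ t in (0:ℝ)..1, ∫ x, φ (t, x) ∂(ρ t)))) ∧
  (∀ i : Fin d, ∀ φ : ℝ × Euc d → ℝ, Continuous φ →
    Tendsto (fun n => ∫ t in (0:ℝ)..1, sInt (fun x => φ (t, x)) (qn n t i)) atTop
      (nhds (∫ t in (0:ℝ)..1, sInt (fun x => φ (t, x)) (q t i)))) ∧
  ∃ M : ℝ≥0∞, M < ⊤ ∧ ∀ n, ∀ t ∈ Icc (0:ℝ) 1, Fc α (ρn n t) (qn n t) ≤ M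

/-! ### Signed measures carried by a compact set -/

/-- The signed measure `s` is carried by `Ω`. -/
def Carried {d : ℕ} (Ω : Set (Euc d)) (s : SignedMeasure (Euc d)) : Prop :=
  s.toJordanDecomposition.posPart Ωᶜ = 0 ∧ s.toJordanDecomposition.negPart Ωᶜ = 0

/-- Total mass of a signed measure, as a real number. -/
noncomputable def tmass {E : Type*} [MeasurableSpace E] (s : SignedMeasure E) : ℝ :=
  s.toJordanDecomposition.posPart.real univ + s.toJordanDecomposition.negPart.real univ

theorem tmass_nonneg {E : Type*} [MeasurableSpace E] (s : SignedMeasure E) : 0 ≤ tmass s := by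
  unfold tmass; positivity

theorem ae_mem_of_compl_null {d : ℕ} {Ω : Set (Euc d)} {μ : Measure (Euc d)} (h : μ Ωᶜ = 0) :
    ∀ᵐ x ∂μ, x ∈ Ω := by
  rw [ae_iff]; exact h

theorem integrable_of_carried {d : ℕ} {F : Type*} [NormedAddCommGroup F] {Ω : Set (Euc d)}
    (hΩ : IsCompact Ω) {μ : Measure (Euc d)} [IsFiniteMeasure μ] (h : μ Ωᶜ = 0)
    {f : Euc d → F} (hf : Continuous f) : Integrable f μ := by
  have h1 : IntegrableOn f Ω μ := hf.continuousOn.integrableOn_compact hΩ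
  rwa [IntegrableOn, Measure.restrict_eq_self_of_ae_mem (ae_mem_of_compl_null h)] at h1

theorem sInt_const_mul {E : Type*} [MeasurableSpace E] (s : SignedMeasure E) (c : ℝ)
    (f : E → ℝ) : sInt (fun x => c * f x) s = c * sInt f s := by
  simp only [sInt, integral_const_mul, mul_sub]

theorem sInt_sub {d : ℕ} {Ω : Set (Euc d)} (hΩ : IsCompact Ω) {s : SignedMeasure (Euc d)}
    (hs : Carried Ω s) {f g : Euc d → ℝ} (hf : Continuous f) (hg : Continuous g) :
    sInt (fun x => f x - g x) s = sInt f s - sInt g s := by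
  simp only [sInt]
  rw [integral_sub (integrable_of_carried hΩ hs.1 hf) (integrable_of_carried hΩ hs.1 hg),
    integral_sub (integrable_of_carried hΩ hs.2 hf) (integrable_of_carried hΩ hs.2 hg)]
  ring

theorem abs_sInt_le {d : ℕ} {Ω : Set (Euc d)} {s : SignedMeasure (Euc d)}
    (hs : Carried Ω s) {f : Euc d → ℝ} {C : ℝ} (hC : ∀ x ∈ Ω, |f x| ≤ C) :
    |sInt f s| ≤ C * tmass s := by
  have h1 : ‖∫ x, f x ∂s.toJordanDecomposition.posPart‖ ≤
      C * s.toJordanDecomposition.posPart.real univ :=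
    norm_integral_le_of_norm_le_const
      ((ae_mem_of_compl_null hs.1).mono fun x hx => hC x hx)
  have h2 : ‖∫ x, f x ∂s.toJordanDecomposition.negPart‖ ≤
      C * s.toJordanDecomposition.negPart.real univ :=
    norm_integral_le_of_norm_le_const
      ((ae_mem_of_compl_null hs.2).mono fun x hx => hC x hx)
  rw [Real.norm_eq_abs] at h1 h2
  unfold sInt tmass
  rw [mul_add]
  exact (abs_sub _ _).trans (add_le_add h1 h2)

/-- If `s` has density `p` with respect to `μ`, integrating against `s` is integrating against
`p μ`. The Jordan decomposition and the decomposition `p⁺μ - p⁻μ` represent the same signed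
measure, so the measures `s⁺ + p⁻μ` and `p⁺μ + s⁻` coincide. -/
theorem sInt_eq_integral {d : ℕ} {Ω : Set (Euc d)} (hΩ : IsCompact Ω)
    {s : SignedMeasure (Euc d)} (hs : Carried Ω s) {μ : Measure (Euc d)} [IsFiniteMeasure μ]
    (hμ : μ Ωᶜ = 0) {p : Euc d → ℝ} (hp : Integrable p μ)
    (hsp : ∀ A, MeasurableSet A → s A = ∫ x in A, p x ∂μ) {f : Euc d → ℝ}
    (hf : Continuous f) : sInt f s = ∫ x, f x * p x ∂μ := by
  set P := s.toJordanDecomposition.posPart with hP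
  set N := s.toJordanDecomposition.negPart with hN
  set Q := μ.withDensity fun x => ENNReal.ofReal (p x) with hQ
  set T := μ.withDensity fun x => ENNReal.ofReal (-p x) with hT
  have fQ : IsFiniteMeasure Q := isFiniteMeasure_withDensity_ofReal hp.2
  have fT : IsFiniteMeasure T := isFiniteMeasure_withDensity_ofReal hp.neg.2
  have hQ0 : Q Ωᶜ = 0 := withDensity_absolutelyContinuous _ _ hμ
  have hT0 : T Ωᶜ = 0 := withDensity_absolutelyContinuous _ _ hμ
  have hpn : AEMeasurable (fun x => -p x) μ := hp.1.aemeasurable.neg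
  have key : P + T = Q + N := by
    ext A hA
    have e1 := s.apply_eq_posPart_real_sub_negPart_real hA
    rw [hsp A hA, integral_eq_lintegral_pos_part_sub_lintegral_neg_part hp.integrableOn,
      ← withDensity_apply _ hA, ← withDensity_apply _ hA] at e1
    change Q.real A - T.real A = P.real A - N.real A at e1
    have e2 : (P + T).real A = (Q + N).real A := by
      rw [measureReal_add_apply, measureReal_add_apply]; linarith
    rwa [measureReal_def, measureReal_def, ENNReal.toReal_eq_toReal_iff' (by finiteness)
      (by finiteness)] at e2
  have iP := integrable_of_carried hΩ hs.1 hf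
  have iN := integrable_of_carried hΩ hs.2 hf
  have iQ := integrable_of_carried hΩ hQ0 hf
  have iT := integrable_of_carried hΩ hT0 hf
  have e3 : ∫ x, f x ∂(P + T) = ∫ x, f x ∂(Q + N) := by rw [key]
  rw [integral_add_measure iP iT, integral_add_measure iQ iN] at e3
  have e4 : ∫ x, f x ∂Q = ∫ x, max (p x) 0 * f x ∂μ := by
    rw [hQ, integral_withDensity_eq_integral_toReal_smul₀ hp.1.aemeasurable.ennreal_ofReal
      (by simp)]
    simp [ENNReal.toReal_ofReal']
  have e5 : ∫ x, f x ∂T = ∫ x, max (-p x) 0 * f x ∂μ := by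
    rw [hT, integral_withDensity_eq_integral_toReal_smul₀ hpn.ennreal_ofReal
      (by simp)]
    simp [ENNReal.toReal_ofReal']
  have i4 : Integrable (fun x => max (p x) 0 * f x) μ := by
    have := (integrable_withDensity_iff_integrable_smul₀' hp.1.aemeasurable.ennreal_ofReal
      (by simp)).1 iQ
    simpa [ENNReal.toReal_ofReal'] using this
  have i5 : Integrable (fun x => max (-p x) 0 * f x) μ := by
    have := (integrable_withDensity_iff_integrable_smul₀' hpn.ennreal_ofReal
      (by simp)).1 iT
    simpa [ENNReal.toReal_ofReal'] using this
  have e6 : ∫ x, f x * p x ∂μ = ∫ x, f x ∂Q - ∫ x, f x ∂T := by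
    rw [e4, e5, ← integral_sub i4 i5]
    congr 1; ext x
    rcases le_total 0 (p x) with h | h
    · rw [max_eq_left h, max_eq_right (by linarith)]; ring
    · rw [max_eq_right h, max_eq_left (by linarith)]; ring
  rw [e6, sInt, ← hP, ← hN]
  linarith

/-- The total mass of each component is at most the total variation of the vector measure: test
with the two sets of a Hahn decomposition. -/
theorem tmass_le_tvVec {m : ℕ} {E : Type*} [MeasurableSpace E] (σ : Fin m → SignedMeasure E)
    (i : Fin m) : ENNReal.ofReal (tmass (σ i)) ≤ tvVec σ := by
  obtain ⟨A, hA, h1, h2⟩ := (σ i).toJordanDecomposition.mutuallySingular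
  have h1' : (σ i).toJordanDecomposition.posPart.real A = 0 := by simp [measureReal_def, h1]
  have h2' : (σ i).toJordanDecomposition.negPart.real Aᶜ = 0 := by simp [measureReal_def, h2]
  have p1 : (σ i).toJordanDecomposition.posPart.real univ ≤ |σ i Aᶜ| := by
    rw [(σ i).apply_eq_posPart_real_sub_negPart_real hA.compl, h2', sub_zero,
      ← measureReal_add_measureReal_compl hA, h1', zero_add]
    exact le_abs_self _
  have p2 : (σ i).toJordanDecomposition.negPart.real univ ≤ |σ i A| := by
    rw [(σ i).apply_eq_posPart_real_sub_negPart_real hA, h1', zero_sub, abs_neg,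
      ← measureReal_add_measureReal_compl hA, h2', add_zero]
    exact le_abs_self _
  have key : ∀ B, |σ i B| ≤ Real.sqrt (∑ j, σ j B ^ 2) := fun B => by
    rw [← Real.sqrt_sq_eq_abs]
    exact Real.sqrt_le_sqrt (Finset.single_le_sum (f := fun j => σ j B ^ 2)
      (fun j _ => sq_nonneg _) (Finset.mem_univ i))
  unfold tvVec
  refine le_trans ?_ (le_iSup _ 2)
  refine le_trans ?_ (le_iSup _ ![Aᶜ, A])
  refine le_trans ?_ (le_iSup _ ?_)
  · refine le_trans ?_ (le_iSup _ ?_)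
    · rw [Fin.sum_univ_two, ← ENNReal.ofReal_add (by positivity) (by positivity)]
      apply ENNReal.ofReal_le_ofReal
      have := key A
      have := key Aᶜ
      simp only [Matrix.cons_val_zero, Matrix.cons_val_one]
      unfold tmass
      linarith
    · intro a b hab
      fin_cases a <;> fin_cases b <;> simp_all [Function.onFun, disjoint_compl_left,
        disjoint_compl_right]
  · intro k
    fin_cases k <;> simp [hA]

theorem measurable_sInt_of_bounded {E : Type*} [MeasurableSpace E] {s : ℝ → SignedMeasure E}
    (hs : ∀ A, MeasurableSet A → Measurable fun t => s t A) {f : E → ℝ} (hf : Measurable f)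
    {C : ℝ} (hC : ∀ x, |f x| ≤ C) : Measurable fun t => sInt f (s t) := by
  have hsm : StronglyMeasurable f := hf.stronglyMeasurable
  have simpleM : ∀ g : SimpleFunc E ℝ, Measurable fun t => sInt g (s t) := by
    intro g
    have : ∀ t, sInt g (s t) = ∑ y ∈ g.range, s t (g ⁻¹' {y}) * y := by
      intro t
      unfold sInt
      rw [← SimpleFunc.integral_eq_integral _ (SimpleFunc.integrable_of_isFiniteMeasure g),
        ← SimpleFunc.integral_eq_integral _ (SimpleFunc.integrable_of_isFiniteMeasure g),
        SimpleFunc.integral_eq, SimpleFunc.integral_eq, ← Finset.sum_sub_distrib]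
      refine Finset.sum_congr rfl fun y _ => ?_
      rw [(s t).apply_eq_posPart_real_sub_negPart_real (g.measurableSet_preimage _)]
      simp only [smul_eq_mul]; ring
    simp_rw [this]
    exact Finset.measurable_sum _ fun y _ => (hs _ (g.measurableSet_preimage _)).mul_const _
  refine measurable_of_tendsto_metrizable (f := fun n t => sInt (hsm.approxBounded C n) (s t))
    (fun n => simpleM _) ?_
  rw [tendsto_pi_nhds]
  intro t
  have hC0 : ∀ x, 0 ≤ C := fun x => (abs_nonneg _).trans (hC x)
  have dom : ∀ μ : Measure E, IsFiniteMeasure μ →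
      Tendsto (fun n => ∫ x, hsm.approxBounded C n x ∂μ) atTop (nhds (∫ x, f x ∂μ)) := by
    intro μ hμ
    refine tendsto_integral_of_dominated_convergence (fun _ => C)
      (fun n => (SimpleFunc.measurable _).aestronglyMeasurable) (integrable_const C) ?_ ?_
    · exact fun n => Eventually.of_forall fun x => hsm.norm_approxBounded_le (hC0 x) n x
    · exact Eventually.of_forall fun x => hsm.tendsto_approxBounded_of_norm_le (hC x)
  exact (dom _ inferInstance).sub (dom _ inferInstance)

theorem aemeasurable_sInt {d : ℕ} {Ω : Set (Euc d)} (hΩ : IsCompact Ω)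
    {s : ℝ → SignedMeasure (Euc d)} (hs : ∀ A, MeasurableSet A → Measurable fun t => s t A)
    (hc : ∀ t ∈ Icc (0:ℝ) 1, Carried Ω (s t)) {f : Euc d → ℝ} (hf : Continuous f) :
    AEMeasurable (fun t => sInt f (s t)) (volume.restrict (Icc (0:ℝ) 1)) := by
  obtain ⟨C, hC⟩ := hΩ.exists_bound_of_continuousOn hf.continuousOn
  have hb : ∀ x, |Ω.indicator f x| ≤ max C 0 := by
    intro x
    by_cases hx : x ∈ Ω
    · rw [indicator_of_mem hx]; exact (hC x hx).trans (le_max_left _ _)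
    · rw [indicator_of_notMem hx]; simp
  refine ⟨_, measurable_sInt_of_bounded hs (hf.measurable.indicator hΩ.measurableSet) hb, ?_⟩
  filter_upwards [ae_restrict_mem measurableSet_Icc] with t ht
  unfold sInt
  congr 1
  · refine integral_congr_ae ((ae_mem_of_compl_null (hc t ht).1).mono fun x hx => ?_)
    simp only [indicator_of_mem hx]
  · refine integral_congr_ae ((ae_mem_of_compl_null (hc t ht).2).mono fun x hx => ?_)
    simp only [indicator_of_mem hx]

/-! ### Pairing with vector fields and the lower bound for the integrand -/

/-- The pairing `∫ ψ · dq` of a vector field with a vector measure given by components. -/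
noncomputable def pairing {d : ℕ} (ψ : Euc d → Euc d) (q : Fin d → SignedMeasure (Euc d)) : ℝ :=
  ∑ i, sInt (fun x => ψ x i) (q i)

theorem continuous_coord {d : ℕ} {ψ : Euc d → Euc d} (hψ : Continuous ψ) (i : Fin d) :
    Continuous fun x => ψ x i := (EuclideanSpace.proj (𝕜 := ℝ) i).continuous.comp hψ

theorem pairing_smul {d : ℕ} (c : ℝ) (ψ : Euc d → Euc d) (q : Fin d → SignedMeasure (Euc d)) :
    pairing (fun x => c • ψ x) q = c * pairing ψ q := by
  simp only [pairing, PiLp.smul_apply, smul_eq_mul, sInt_const_mul, Finset.mul_sum]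

theorem pairing_neg {d : ℕ} (ψ : Euc d → Euc d) (q : Fin d → SignedMeasure (Euc d)) :
    pairing (fun x => -ψ x) q = -pairing ψ q := by
  have := pairing_smul (-1) ψ q
  simpa using this

theorem abs_pairing_sub_le {d : ℕ} {Ω : Set (Euc d)} (hΩ : IsCompact Ω)
    {q : Fin d → SignedMeasure (Euc d)} (hq : ∀ i, Carried Ω (q i)) {ψ χ : Euc d → Euc d}
    (hψ : Continuous ψ) (hχ : Continuous χ) {δ : ℝ} (h : ∀ x ∈ Ω, ‖ψ x - χ x‖ ≤ δ) :
    |pairing ψ q - pairing χ q| ≤ δ * ∑ i, tmass (q i) := by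
  unfold pairing
  rw [← Finset.sum_sub_distrib, Finset.mul_sum]
  refine (Finset.abs_sum_le_sum_abs _ _).trans (Finset.sum_le_sum fun i _ => ?_)
  rw [← sInt_sub hΩ (hq i) (continuous_coord hψ i) (continuous_coord hχ i)]
  refine abs_sInt_le (hq i) fun x hx => ?_
  exact (PiLp.norm_apply_le (ψ x - χ x) i).trans (h x hx)

theorem pairing_eq_integral {d : ℕ} {Ω : Set (Euc d)} (hΩ : IsCompact Ω)
    {q : Fin d → SignedMeasure (Euc d)} (hq : ∀ i, Carried Ω (q i))
    {μ : Measure (Euc d)} [IsFiniteMeasure μ] (hμ : μ Ωᶜ = 0) {v : Euc d → Euc d}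
    (hv : ∀ i, Integrable (fun x => v x i) μ)
    (hqv : ∀ i, ∀ s : Set (Euc d), MeasurableSet s → q i s = ∫ x in s, v x i ∂μ)
    {ψ : Euc d → Euc d} (hψ : Continuous ψ) :
    pairing ψ q = ∫ x, inner ℝ (ψ x) (v x) ∂μ := by
  have h1 : ∀ i, sInt (fun x => ψ x i) (q i) = ∫ x, ψ x i * v x i ∂μ := fun i =>
    sInt_eq_integral hΩ (hq i) hμ (hv i) (hqv i) (continuous_coord hψ i)
  have h2 : ∀ i, Integrable (fun x => ψ x i * v x i) μ := by
    intro i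
    obtain ⟨C, hC⟩ := hΩ.exists_bound_of_continuousOn (continuous_coord hψ i).continuousOn
    exact (hv i).bdd_mul (continuous_coord hψ i).aestronglyMeasurable
      ((ae_mem_of_compl_null hμ).mono fun x hx => hC x hx)
  simp only [pairing, h1]
  rw [← integral_finsetSum _ fun i _ => h2 i]
  congr 1; ext x
  simp [PiLp.inner_apply, mul_comm]

theorem integrable_of_coord {d : ℕ} {μ : Measure (Euc d)} {v : Euc d → Euc d}
    (hv : ∀ i, Integrable (fun x => v x i) μ) : Integrable v μ := by
  have : Integrable (fun x => ∑ i, v x i • (EuclideanSpace.single i (1:ℝ) : Euc d)) μ :=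
    integrable_finsetSum _ fun i _ => (hv i).smul_const _
  convert this using 2 with x
  ext j
  simp [Finset.sum_apply, Pi.single_apply]

/-- Duality lower bound: `∫ ψ · dq ≤ F(ρ, q)` as soon as `|ψ(x)| ρ({x}) ≤ ρ({x})^α` on `Ω`.
When `F` is finite, `q` is carried by the atoms of `ρ`, and the inequality holds atom by atom. -/
theorem ofReal_pairing_le_Fc {d : ℕ} {α : ℝ} (hα : 0 < α) {Ω : Set (Euc d)} (hΩ : IsCompact Ω)
    {ρ : Measure (Euc d)} [IsFiniteMeasure ρ] (hρ : ρ Ωᶜ = 0)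
    {q : Fin d → SignedMeasure (Euc d)} (hq : ∀ i, Carried Ω (q i))
    {ψ : Euc d → Euc d} (hψ : Continuous ψ)
    (hle : ∀ x ∈ Ω, ENNReal.ofReal ‖ψ x‖ * ρ {x} ≤ ρ {x} ^ α) :
    ENNReal.ofReal (pairing ψ q) ≤ Fc α ρ q := by
  unfold Fc
  refine le_iInf₂ fun v hv => ?_
  obtain ⟨hv1, hv2⟩ := hv
  unfold Ga
  split_ifs with hat
  swap
  · exact le_top
  obtain ⟨s, hs, hs0⟩ := hat
  have hvi := integrable_of_coord hv1
  have hm : AEMeasurable (fun x => ENNReal.ofReal (‖v x‖ ^ (1 / α))) ρ :=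
    (hvi.1.norm.aemeasurable.pow_const _).ennreal_ofReal
  set μ := ρ.withDensity fun x => ENNReal.ofReal (‖v x‖ ^ (1 / α)) with hμ
  have hatom : ∀ x, μ {x} ^ α = ENNReal.ofReal ‖v x‖ * ρ {x} ^ α := by
    intro x
    rw [hμ, withDensity_apply _ (measurableSet_singleton x), lintegral_singleton,
      ENNReal.mul_rpow_of_nonneg _ _ hα.le, ENNReal.ofReal_rpow_of_nonneg (by positivity) hα.le,
      ← Real.rpow_mul (norm_nonneg _), one_div_mul_cancel hα.ne', Real.rpow_one]
  have hnull : ∀ᵐ x ∂ρ, x ∈ sᶜ → ENNReal.ofReal (‖ψ x‖ * ‖v x‖) = 0 := by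
    rw [hμ, withDensity_apply_eq_zero' hm] at hs0
    rw [ae_iff]
    refine measure_mono_null (fun x hx => ?_) hs0
    simp only [mem_ofPred_eq, Classical.not_imp] at hx
    refine ⟨?_, hx.1⟩
    have h1 : 0 < ‖v x‖ := by
      rw [norm_pos_iff]
      intro h0
      exact hx.2 (by simp [h0])
    simp only [mem_ofPred_eq, ne_eq, ENNReal.ofReal_eq_zero, not_le]
    positivity
  calc ENNReal.ofReal (pairing ψ q)
      = ENNReal.ofReal (∫ x, inner ℝ (ψ x) (v x) ∂ρ) := by
        rw [pairing_eq_integral hΩ hq hρ hv1 hv2 hψ]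
    _ ≤ ENNReal.ofReal ‖∫ x, inner ℝ (ψ x) (v x) ∂ρ‖ :=
        ENNReal.ofReal_le_ofReal (le_abs_self _)
    _ ≤ ∫⁻ x, ENNReal.ofReal ‖inner ℝ (ψ x) (v x)‖ ∂ρ := by
        rw [ofReal_norm]
        refine (enorm_integral_le_lintegral_enorm _).trans (le_of_eq ?_)
        simp_rw [ofReal_norm]
    _ ≤ ∫⁻ x, ENNReal.ofReal (‖ψ x‖ * ‖v x‖) ∂ρ :=
        lintegral_mono fun x => ENNReal.ofReal_le_ofReal (norm_inner_le_norm _ _)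
    _ = ∫⁻ x in s, ENNReal.ofReal (‖ψ x‖ * ‖v x‖) ∂ρ := by
        rw [← lintegral_add_compl _ hs.measurableSet,
          setLIntegral_congr_fun_ae hs.measurableSet.compl hnull]
        simp
    _ = ∑' x : s, ENNReal.ofReal (‖ψ x‖ * ‖v x‖) * ρ {x.1} := lintegral_countable _ hs
    _ ≤ ∑' x : s, μ {x.1} ^ α := by
        refine ENNReal.tsum_le_tsum fun x => ?_
        rw [hatom, ENNReal.ofReal_mul (norm_nonneg _), mul_comm (ENNReal.ofReal ‖ψ x‖), mul_assoc]
        gcongr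
        by_cases hx : x.1 ∈ Ω
        · exact hle _ hx
        · have : ρ {x.1} = 0 := measure_mono_null (singleton_subset_iff.2 hx) hρ
          simp [this]
    _ ≤ ∑' x : Euc d, μ {x} ^ α := ENNReal.tsum_comp_le_tsum_of_injective Subtype.val_injective _
    _ = ∑' x : {x : Euc d // μ {x} ≠ 0}, μ {x.1} ^ α := by
        refine (tsum_subtype_eq_of_support_subset (f := fun x => μ {x} ^ α)
          (s := {x | μ {x} ≠ 0}) fun x hx => ?_).symm
        intro h0
        apply hx
        simp only [h0, ENNReal.zero_rpow_of_pos hα]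

theorem ofReal_pairing_le_Fc_of_norm_le_one {d : ℕ} {α : ℝ} (hα : 0 < α) (hα' : α < 1)
    {Ω : Set (Euc d)} (hΩ : IsCompact Ω)
    {ρ : Measure (Euc d)} [IsProbabilityMeasure ρ] (hρ : ρ Ωᶜ = 0)
    {q : Fin d → SignedMeasure (Euc d)} (hq : ∀ i, Carried Ω (q i))
    {ψ : Euc d → Euc d} (hψ : Continuous ψ) (hle : ∀ x ∈ Ω, ‖ψ x‖ ≤ 1) :
    ENNReal.ofReal (pairing ψ q) ≤ Fc α ρ q := by
  refine ofReal_pairing_le_Fc hα hΩ hρ hq hψ fun x hx => ?_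
  calc ENNReal.ofReal ‖ψ x‖ * ρ {x} ≤ 1 * ρ {x} := by
        gcongr; exact ENNReal.ofReal_le_one.2 (hle x hx)
    _ = ρ {x} ^ (1:ℝ) := by simp
    _ ≤ ρ {x} ^ α := ENNReal.rpow_le_rpow_of_exponent_ge prob_le_one (le_of_lt hα' : α ≤ 1)

/-- A bound `F(ρ, q) ≤ M` controls the pairing with every vector field. -/
theorem abs_pairing_le {d : ℕ} {α : ℝ} (hα : 0 < α) (hα' : α < 1)
    {Ω : Set (Euc d)} (hΩ : IsCompact Ω)
    {ρ : Measure (Euc d)} [IsProbabilityMeasure ρ] (hρ : ρ Ωᶜ = 0)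
    {q : Fin d → SignedMeasure (Euc d)} (hq : ∀ i, Carried Ω (q i))
    {ψ : Euc d → Euc d} (hψ : Continuous ψ) {C : ℝ} (hC : 0 < C) (hle : ∀ x ∈ Ω, ‖ψ x‖ ≤ C)
    {M : ℝ≥0∞} (hM : M < ⊤) (hF : Fc α ρ q ≤ M) : |pairing ψ q| ≤ C * M.toReal := by
  have key : ∀ χ : Euc d → Euc d, Continuous χ → (∀ x ∈ Ω, ‖χ x‖ ≤ C) →
      pairing χ q ≤ C * M.toReal := by
    intro χ hχ hb
    have h1 := (ofReal_pairing_le_Fc_of_norm_le_one hα hα' hΩ hρ hq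
      (ψ := fun x => C⁻¹ • χ x) (hχ.const_smul C⁻¹) fun x hx => by
        rw [norm_smul, Real.norm_of_nonneg (by positivity), inv_mul_le_one₀ hC]
        exact hb x hx).trans hF
    rw [pairing_smul, ENNReal.ofReal_le_iff_le_toReal hM.ne, inv_mul_le_iff₀ hC] at h1
    exact h1
  rw [abs_le]
  constructor
  · have := key (fun x => -ψ x) hψ.neg (by simpa using hle)
    rw [pairing_neg] at this
    linarith
  · exact key ψ hψ hle

/-! ### Smoothed point masses and the duality formula for the integrand -/

/-- The smoothed point mass `∫ exp(-k|x-y|²) dρ(y)`, which decreases to `ρ({x})` as `k → ∞`. -/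
noncomputable def gconc {d : ℕ} (k : ℕ) (ρ : Measure (Euc d)) (x : Euc d) : ℝ :=
  ∫ y, Real.exp (-(k * ‖x - y‖ ^ 2)) ∂ρ

/-- `ψ` is admissible for `ρ` at scale `k`: the smoothed version
`|ψ(x)| ≤ (∫ exp(-k|x-y|²) dρ(y) + 1/(k+1))^(α-1)` of `|ψ(x)| ≤ ρ({x})^(α-1)`. The summand
`1/(k+1)` leaves room for replacing `ρ` by a nearby measure. -/
def Adm {d : ℕ} (α : ℝ) (Ω : Set (Euc d)) (k : ℕ) (ψ : Euc d → Euc d) (ρ : Measure (Euc d)) :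
    Prop :=
  ∀ x ∈ Ω, ‖ψ x‖ * (gconc k ρ x + 1 / (k + 1)) ^ (1 - α) ≤ 1

theorem gconc_nonneg {d : ℕ} (k : ℕ) (ρ : Measure (Euc d)) (x : Euc d) : 0 ≤ gconc k ρ x :=
  integral_nonneg fun _ => (Real.exp_pos _).le

section gconc
variable {d : ℕ} (k : ℕ) (ρ : Measure (Euc d)) [IsProbabilityMeasure ρ]

theorem continuous_kernel (x : Euc d) :
    Continuous fun y : Euc d => Real.exp (-(k * ‖x - y‖ ^ 2)) := by fun_prop

theorem kernel_le_one (x y : Euc d) : Real.exp (-(k * ‖x - y‖ ^ 2)) ≤ 1 := by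
  rw [Real.exp_le_one_iff, neg_nonpos]; positivity

theorem integrable_kernel (x : Euc d) :
    Integrable (fun y : Euc d => Real.exp (-(k * ‖x - y‖ ^ 2))) ρ := by
  refine (integrable_const (1:ℝ)).mono' (continuous_kernel k x).aestronglyMeasurable
    (Eventually.of_forall fun y => ?_)
  rw [Real.norm_of_nonneg (Real.exp_pos _).le]
  exact kernel_le_one k x y

theorem gconc_le_one (x : Euc d) : gconc k ρ x ≤ 1 := by
  have := integral_mono (integrable_kernel k ρ x) (integrable_const (1:ℝ))
    fun y => kernel_le_one k x y
  simpa [gconc] using this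

theorem continuous_gconc : Continuous (gconc k ρ) := by
  refine continuous_of_dominated (bound := fun _ => 1)
    (fun x => (continuous_kernel k x).aestronglyMeasurable) ?_ (integrable_const _) ?_
  · refine fun x => Eventually.of_forall fun y => ?_
    rw [Real.norm_of_nonneg (Real.exp_pos _).le]
    exact kernel_le_one k x y
  · exact Eventually.of_forall fun y => by fun_prop

theorem mass_le_gconc (x : Euc d) : ρ.real {x} ≤ gconc k ρ x := by
  have h1 : ∫ y in ({x} : Set (Euc d)), Real.exp (-(k * ‖x - y‖ ^ 2)) ∂ρ = ρ.real {x} := by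
    rw [integral_singleton]; simp
  rw [← h1]
  exact setIntegral_le_integral (integrable_kernel k ρ x)
    (Eventually.of_forall fun _ => (Real.exp_pos _).le)

theorem tendsto_gconc (x : Euc d) :
    Tendsto (fun k => gconc k ρ x) atTop (nhds (ρ.real {x})) := by
  have h1 : ∫ y, indicator {x} (fun _ => (1:ℝ)) y ∂ρ = ρ.real {x} := by
    rw [integral_indicator_const _ (measurableSet_singleton x)]; simp
  rw [← h1]
  refine tendsto_integral_of_dominated_convergence (fun _ => 1)
    (fun n => (continuous_kernel n x).aestronglyMeasurable) (integrable_const _) ?_ ?_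
  · refine fun n => Eventually.of_forall fun y => ?_
    rw [Real.norm_of_nonneg (Real.exp_pos _).le]
    exact kernel_le_one n x y
  · refine Eventually.of_forall fun y => ?_
    by_cases hy : y = x
    · subst hy; simp
    · rw [indicator_of_notMem (by simpa using hy)]
      have hpos : 0 < ‖x - y‖ ^ 2 := by
        have : 0 < ‖x - y‖ := norm_pos_iff.2 (sub_ne_zero.2 (Ne.symm hy))
        positivity
      exact Real.tendsto_exp_neg_atTop_nhds_zero.comp
        (tendsto_natCast_atTop_atTop.atTop_mul_const hpos)

end gconc

/-- Polar decomposition of a vector measure: `q = ξ τ` with `τ` finite and `|ξ| = 1`. -/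
theorem exists_polar {d : ℕ} {Ω : Set (Euc d)} {q : Fin d → SignedMeasure (Euc d)}
    (hq : ∀ i, Carried Ω (q i)) :
    ∃ (τ : Measure (Euc d)) (ξ : Euc d → Euc d), IsFiniteMeasure τ ∧ Measurable ξ ∧ τ Ωᶜ = 0 ∧
      (∀ x, ‖ξ x‖ ≤ 1) ∧ (∀ᵐ x ∂τ, ‖ξ x‖ = 1) ∧
      ∀ i, ∀ s : Set (Euc d), MeasurableSet s → q i s = ∫ x in s, ξ x i ∂τ := by
  set σ : Measure (Euc d) := ∑ i, (q i).totalVariation with hσ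
  have fσ : IsFiniteMeasure σ := inferInstance
  have hσ0 : σ Ωᶜ = 0 := by
    rw [hσ, Measure.finsetSum_apply]
    refine Finset.sum_eq_zero fun i _ => ?_
    rw [SignedMeasure.totalVariation, Measure.add_apply, (hq i).1, (hq i).2, add_zero]
  have hac : ∀ i, q i ≪ᵥ σ.toENNRealVectorMeasure := by
    intro i
    refine VectorMeasure.AbsolutelyContinuous.mk fun s hs h0 => ?_
    rw [Measure.toENNRealVectorMeasure_apply_measurable hs, hσ, Measure.finsetSum_apply,
      Finset.sum_eq_zero_iff] at h0
    exact (q i).null_of_totalVariation_zero (h0 i (Finset.mem_univ i))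
  set p : Euc d → Euc d := fun x => WithLp.toLp 2 fun i => (q i).rnDeriv σ x with hp
  have pm : Measurable p := by
    refine (WithLp.measurable_toLp 2 _).comp (measurable_pi_lambda _ fun i => ?_)
    exact SignedMeasure.measurable_rnDeriv _ _
  have pi : Integrable p σ := integrable_of_coord fun i => SignedMeasure.integrable_rnDeriv _ _
  have hqp : ∀ i, ∀ s : Set (Euc d), MeasurableSet s → q i s = ∫ x in s, p x i ∂σ := by
    intro i s hs
    conv_lhs => rw [← SignedMeasure.withDensityᵥ_rnDeriv_eq (q i) σ (hac i)]
    rw [withDensityᵥ_apply (SignedMeasure.integrable_rnDeriv _ _) hs]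
  have nm : Measurable fun x => ‖p x‖ₑ := pm.enorm
  refine ⟨σ.withDensity fun x => ‖p x‖ₑ, fun x => ‖p x‖⁻¹ • p x, ?_, ?_, ?_, ?_, ?_, ?_⟩
  · exact isFiniteMeasure_withDensity pi.2.ne
  · exact pm.norm.inv.smul pm
  · exact withDensity_absolutelyContinuous _ _ hσ0
  · intro x
    rw [norm_smul, norm_inv, norm_norm]
    exact inv_mul_le_one
  · rw [ae_withDensity_iff nm]
    refine Eventually.of_forall fun x hx => ?_
    rw [norm_smul, norm_inv, norm_norm, inv_mul_cancel₀]
    simpa using hx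
  · intro i s hs
    rw [hqp i s hs, setIntegral_withDensity_eq_setIntegral_toReal_smul nm (by simp) _ hs]
    refine setIntegral_congr_fun hs fun x _ => ?_
    by_cases h0 : p x = 0
    · simp [h0]
    · have : ‖p x‖ ≠ 0 := by simpa using h0
      simp only [toReal_enorm, PiLp.smul_apply, smul_eq_mul]
      field_simp

/-- The radial retraction onto the closed unit ball. -/
noncomputable def ballRetr {d : ℕ} (y : Euc d) : Euc d := (max 1 ‖y‖)⁻¹ • y

theorem continuous_ballRetr {d : ℕ} : Continuous (ballRetr (d := d)) := by
  unfold ballRetr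
  refine Continuous.smul (Continuous.inv₀ (continuous_const.max continuous_norm) fun y => ?_)
    continuous_id
  have : (1:ℝ) ≤ max 1 ‖y‖ := le_max_left _ _
  linarith

theorem norm_ballRetr_le {d : ℕ} (y : Euc d) : ‖ballRetr y‖ ≤ 1 := by
  have h1 : (1:ℝ) ≤ max 1 ‖y‖ := le_max_left _ _
  rw [ballRetr, norm_smul, norm_inv, Real.norm_of_nonneg (by linarith),
    inv_mul_le_one₀ (by linarith)]
  exact le_max_right _ _

theorem norm_ballRetr_sub_le {d : ℕ} (y z : Euc d) (hz : ‖z‖ ≤ 1) :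
    ‖ballRetr y - z‖ ≤ 2 * ‖z - y‖ := by
  rw [norm_sub_rev z y]
  rcases le_total ‖y‖ 1 with h | h
  · rw [ballRetr, max_eq_left h, inv_one, one_smul]
    linarith [norm_nonneg (y - z)]
  · have h1 : ‖ballRetr y - y‖ = ‖y‖ - 1 := by
      have : ballRetr y - y = -((1 - ‖y‖⁻¹) • y) := by
        rw [ballRetr, max_eq_right h, sub_smul, one_smul, neg_sub]
      rw [this, norm_neg, norm_smul, Real.norm_of_nonneg]
      · have : ‖y‖ ≠ 0 := by positivity
        field_simp
      · rw [sub_nonneg]; exact inv_le_one_of_one_le₀ h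
    have h2 : ‖ballRetr y - z‖ ≤ ‖ballRetr y - y‖ + ‖y - z‖ :=
      norm_sub_le_norm_sub_add_norm_sub _ _ _
    have h3 := norm_sub_norm_le y z
    linarith

theorem exists_dense_near {d : ℕ} {Ω : Set (Euc d)} (hΩ : IsCompact Ω)
    {D : ℕ → C(Euc d, Euc d)} (hD : DenseRange D) {ψ : Euc d → Euc d} (hψ : Continuous ψ)
    {δ : ℝ} (hδ : 0 < δ) : ∃ j, ∀ x ∈ Ω, ‖D j x - ψ x‖ < δ := by
  set Ψ : C(Euc d, Euc d) := ⟨ψ, hψ⟩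
  have ho : IsOpen {f : C(Euc d, Euc d) | MapsTo (f - Ψ) Ω (Metric.ball 0 δ)} :=
    (ContinuousMap.isOpen_setOfPred_mapsTo hΩ Metric.isOpen_ball).preimage
      (continuous_id.sub continuous_const)
  obtain ⟨j, hj⟩ := hD.exists_mem_open ho ⟨Ψ, fun x _ => by simpa using hδ⟩
  refine ⟨j, fun x hx => ?_⟩
  have := hj hx
  simpa [Ψ] using this

/-- The truncated weights integrate to at most the supremum of the pairings with admissible
fields: approximate the polar direction `ξ` of `q` in `L¹(τ)` by a continuous field with values in
the unit ball, multiply by the weight, shrink slightly, and move to the dense family `D`. -/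
theorem integral_weight_le {d : ℕ} {α : ℝ} (hα : 0 < α) (hα' : α < 1)
    {Ω : Set (Euc d)} (hΩ : IsCompact Ω)
    {ρ : Measure (Euc d)} [IsProbabilityMeasure ρ]
    {q : Fin d → SignedMeasure (Euc d)} (hq : ∀ i, Carried Ω (q i))
    {D : ℕ → C(Euc d, Euc d)} (hD : DenseRange D) (k : ℕ) {S : ℝ}
    (hS : ∀ j, Adm α Ω k (D j) ρ → pairing (D j) q ≤ S)
    {τ : Measure (Euc d)} [IsFiniteMeasure τ] (hτ : τ Ωᶜ = 0) {ξ : Euc d → Euc d}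
    (hξ : Measurable ξ) (hξ1 : ∀ x, ‖ξ x‖ ≤ 1) (hξ2 : ∀ᵐ x ∂τ, ‖ξ x‖ = 1)
    (hqξ : ∀ i, ∀ s : Set (Euc d), MeasurableSet s → q i s = ∫ x in s, ξ x i ∂τ) :
    ∫ x, (gconc k ρ x + 1 / (k + 1)) ^ (α - 1) ∂τ ≤ S := by
  set b : Euc d → ℝ := fun x => gconc k ρ x + 1 / (k + 1) with hb
  set f : Euc d → ℝ := fun x => b x ^ (α - 1) with hf
  set V : ℝ := ∑ i, tmass (q i) with hV
  have hk : (0:ℝ) < 1 / (k + 1) := by positivity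
  have hk1 : (1:ℝ) / (k + 1) ≤ 1 := by
    rw [div_le_one (by positivity)]; linarith [(Nat.cast_nonneg k : (0:ℝ) ≤ k)]
  have bpos : ∀ x, 0 < b x := fun x => by have := gconc_nonneg k ρ x; simp only [hb]; linarith
  have b2 : ∀ x, b x ≤ 2 := fun x => by have := gconc_le_one k ρ x; simp only [hb]; linarith
  have bcont : Continuous b := (continuous_gconc k ρ).add continuous_const
  have fcont : Continuous f := bcont.rpow_const fun x => Or.inl (bpos x).ne'
  have fpos : ∀ x, 0 < f x := fun x => Real.rpow_pos_of_pos (bpos x) _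
  have fb : ∀ x, f x * b x ^ (1 - α) = 1 := fun x => by
    simp only [hf]
    rw [← Real.rpow_add (bpos x)]; simp
  set C : ℝ := (1 / ((k:ℝ) + 1)) ^ (α - 1) with hC
  have C0 : 0 ≤ C := by positivity
  have fC : ∀ x, f x ≤ C := fun x =>
    Real.rpow_le_rpow_of_nonpos hk (by have := gconc_nonneg k ρ x; simp only [hb]; linarith)
      (by linarith)
  have bb : ∀ x, b x ^ (1 - α) ≤ 2 := fun x => by
    calc b x ^ (1 - α) ≤ 2 ^ (1 - α) :=
          Real.rpow_le_rpow (bpos x).le (b2 x) (by linarith)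
      _ ≤ 2 ^ (1:ℝ) := Real.rpow_le_rpow_of_exponent_le (by norm_num) (by linarith)
      _ = 2 := by norm_num
  have fint : Integrable f τ := integrable_of_carried hΩ hτ fcont
  have ξint : Integrable ξ τ := (integrable_const (1:ℝ)).mono' hξ.aestronglyMeasurable
    (Eventually.of_forall hξ1)
  have ξi : ∀ i, Integrable (fun x => ξ x i) τ := fun i =>
    (integrable_const (1:ℝ)).mono' ((measurable_pi_apply i).comp
      ((WithLp.measurable_ofLp 2 _).comp hξ)).aestronglyMeasurable
    (Eventually.of_forall fun x => (PiLp.norm_apply_le (ξ x) i).trans (hξ1 x))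
  set I : ℝ := ∫ x, f x ∂τ with hI
  have main : ∀ ε : ℝ, 0 < ε → ε < 1 → (1 - ε) * (I - 2 * C * ε) ≤ S + ε / 2 * V := by
    intro ε h0 h1
    obtain ⟨χ, -, hχ, χc, χi⟩ := ξint.exists_hasCompactSupport_integral_sub_le h0
    set η : Euc d → Euc d := fun x => f x • ballRetr (χ x) with hη
    have rc : Continuous fun x => ballRetr (χ x) := continuous_ballRetr.comp χc
    have ηc : Continuous η := fcont.smul rc
    have ηn : ∀ x, ‖η x‖ ≤ f x := fun x => by
      rw [hη, norm_smul, Real.norm_of_nonneg (fpos x).le]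
      exact mul_le_of_le_one_right (fpos x).le (norm_ballRetr_le _)
    have ηε : Continuous fun x => (1 - ε) • η x := by fun_prop
    obtain ⟨j, hj⟩ := exists_dense_near hΩ hD ηε (half_pos h0)
    have adm : Adm α Ω k (D j) ρ := by
      intro x hx
      have e1 : ‖D j x‖ ≤ (1 - ε) * f x + ε / 2 := by
        have e2 := norm_sub_norm_le (D j x) ((1 - ε) • η x)
        have e3 : ‖(1 - ε) • η x‖ ≤ (1 - ε) * f x := by
          rw [norm_smul, Real.norm_of_nonneg (by linarith)]
          exact mul_le_mul_of_nonneg_left (ηn x) (by linarith)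
        linarith [hj x hx]
      have e4 : 0 ≤ b x ^ (1 - α) := Real.rpow_nonneg (bpos x).le _
      calc ‖D j x‖ * b x ^ (1 - α) ≤ ((1 - ε) * f x + ε / 2) * b x ^ (1 - α) := by gcongr
        _ = (1 - ε) * (f x * b x ^ (1 - α)) + ε / 2 * b x ^ (1 - α) := by ring
        _ ≤ (1 - ε) * 1 + ε / 2 * 2 := by
            rw [fb]; gcongr; exact bb x
        _ = 1 := by ring
    have h2 := hS j adm
    have h3 := abs_pairing_sub_le hΩ hq (D j).continuous ηε
      fun x hx => (hj x hx).le
    rw [pairing_smul] at h3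
    have h4 : I - 2 * C * ε ≤ pairing η q := by
      rw [pairing_eq_integral hΩ hq hτ ξi hqξ ηc]
      have i1 : Integrable (fun x => f x - C * (2 * ‖ξ x - χ x‖)) τ :=
        fint.sub (((ξint.sub χi).norm.const_mul 2).const_mul C)
      have i2 : Integrable (fun x => inner ℝ (η x) (ξ x)) τ := by
        refine fint.mono' (ηc.aestronglyMeasurable.inner hξ.aestronglyMeasurable)
          (Eventually.of_forall fun x => (norm_inner_le_norm _ _).trans ?_)
        calc ‖η x‖ * ‖ξ x‖ ≤ f x * 1 := by gcongr; exacts [(fpos x).le, ηn x, hξ1 x]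
          _ = f x := mul_one _
      calc I - 2 * C * ε ≤ I - C * (2 * ∫ x, ‖ξ x - χ x‖ ∂τ) := by nlinarith
        _ = ∫ x, (f x - C * (2 * ‖ξ x - χ x‖)) ∂τ := by
            have i3 : Integrable (fun x => C * (2 * ‖ξ x - χ x‖)) τ :=
              ((ξint.sub χi).norm.const_mul 2).const_mul C
            rw [integral_sub fint i3, integral_const_mul, integral_const_mul]
        _ ≤ ∫ x, inner ℝ (η x) (ξ x) ∂τ := by
            refine integral_mono_ae i1 i2 (hξ2.mono fun x hx => ?_)
            have e1 : inner ℝ (η x) (ξ x) =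
                f x * (1 + inner ℝ (ballRetr (χ x) - ξ x) (ξ x)) := by
              rw [hη, inner_sub_left, real_inner_self_eq_norm_sq, hx, real_inner_smul_left]
              ring
            have e2 : -(2 * ‖ξ x - χ x‖) ≤ inner ℝ (ballRetr (χ x) - ξ x) (ξ x) := by
              have := abs_real_inner_le_norm (ballRetr (χ x) - ξ x) (ξ x)
              rw [hx, mul_one] at this
              have e3 := norm_ballRetr_sub_le (χ x) (ξ x) (hξ1 x)
              have := (abs_le.1 this).1
              linarith
            have e4 : f x * (2 * ‖ξ x - χ x‖) ≤ C * (2 * ‖ξ x - χ x‖) := by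
              gcongr; exact fC x
            simp only [e1]
            nlinarith [mul_le_mul_of_nonneg_left e2 (fpos x).le]
    have h5 := (abs_le.1 h3).1
    have h6 : (1 - ε) * (I - 2 * C * ε) ≤ (1 - ε) * pairing η q :=
      mul_le_mul_of_nonneg_left h4 (by linarith)
    linarith
  have lim1 : Tendsto (fun ε : ℝ => (1 - ε) * (I - 2 * C * ε)) (nhdsWithin 0 (Ioi 0))
      (nhds ((1 - 0) * (I - 2 * C * 0))) :=
    (Continuous.tendsto (by fun_prop) (0:ℝ)).mono_left nhdsWithin_le_nhds
  have lim2 : Tendsto (fun ε : ℝ => S + ε / 2 * V) (nhdsWithin 0 (Ioi 0))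
      (nhds (S + 0 / 2 * V)) :=
    (Continuous.tendsto (f := fun ε : ℝ => S + ε / 2 * V) (by fun_prop) (0:ℝ)).mono_left
      nhdsWithin_le_nhds
  have := le_of_tendsto_of_tendsto lim1 lim2 (by
    filter_upwards [Ioo_mem_nhdsGT (zero_lt_one' ℝ)] with ε hε using main ε hε.1 hε.2)
  simpa using this

/-- If `q = ξ τ` and the weights integrate to a finite quantity, then `τ` is carried by the
countable set of atoms of `ρ`, so `q` has a density with respect to `ρ`, and `F` is at most that
integral. -/
theorem Fc_le_lintegral {d : ℕ} {α : ℝ} (hα : 0 < α) (hα' : α < 1)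
    {ρ : Measure (Euc d)} [IsProbabilityMeasure ρ]
    {q : Fin d → SignedMeasure (Euc d)}
    {τ : Measure (Euc d)} [IsFiniteMeasure τ] {ξ : Euc d → Euc d}
    (hξ : Measurable ξ) (hξ1 : ∀ x, ‖ξ x‖ ≤ 1)
    (hqξ : ∀ i, ∀ s : Set (Euc d), MeasurableSet s → q i s = ∫ x in s, ξ x i ∂τ)
    (hmeas : Measurable fun x => ρ {x} ^ (α - 1)) :
    Fc α ρ q ≤ ∫⁻ x, ρ {x} ^ (α - 1) ∂τ := by
  by_cases htop : ∫⁻ x, ρ {x} ^ (α - 1) ∂τ = ⊤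
  · rw [htop]; exact le_top
  set A : Set (Euc d) := {x | ρ {x} ≠ 0} with hA
  have Ac : A.Countable := by
    have := Measure.countable_meas_pos_of_disjoint_iUnion (μ := ρ) (As := fun x : Euc d => {x})
      (fun x => measurableSet_singleton x) (fun x y hxy => by simpa [Function.onFun] using hxy)
    refine this.mono fun x hx => ?_
    exact pos_iff_ne_zero.2 hx
  have Am := Ac.measurableSet
  have τA : τ Aᶜ = 0 := by
    have h1 := ae_lt_top hmeas htop
    refine measure_mono_null (fun x hx => ?_) (ae_iff.1 h1)
    have h0 : ρ {x} = 0 := by simpa [hA] using hx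
    change ¬ (ρ {x} ^ (α - 1) < ⊤)
    rw [h0, ENNReal.zero_rpow_of_neg (by linarith)]
    simp
  set r : Euc d → ℝ≥0∞ := fun x => τ {x} / ρ {x} with hr
  have r0 : ∀ x, x ∉ A → r x = 0 := by
    intro x hx
    have : τ {x} = 0 := measure_mono_null (singleton_subset_iff.2 hx) τA
    simp [hr, this]
  have rρ : ∀ x, x ∈ A → r x * ρ {x} = τ {x} := fun x hx =>
    ENNReal.div_mul_cancel hx (measure_ne_top _ _)
  have rtop : ∀ x, r x < ⊤ := by
    intro x
    by_cases hx : x ∈ A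
    · exact ENNReal.div_lt_top (measure_ne_top _ _) hx
    · rw [r0 x hx]; simp
  have rm : Measurable r := by
    refine (measurable_const (a := (0:ℝ≥0∞))).measurable_of_countable_ne (Ac.mono fun x hx => ?_)
    by_contra h
    exact hx (r0 x h).symm
  have hτρ : τ = ρ.withDensity r := by
    ext s hs
    rw [withDensity_apply _ hs]
    have hAs : (A ∩ s).Countable := Ac.mono inter_subset_left
    have e1 : ∫⁻ x in s, r x ∂ρ = ∫⁻ x in A ∩ s, r x ∂ρ := by
      rw [← lintegral_inter_add_sdiff _ s Am, inter_comm s A]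
      have : ∫⁻ x in s \ A, r x ∂ρ = 0 := by
        rw [setLIntegral_congr_fun (hs.diff Am) fun x hx => r0 x hx.2]; simp
      rw [this, add_zero]
    have e2 : τ s = τ (A ∩ s) := by
      have e3 : τ (s \ A) = 0 := measure_mono_null (fun x hx => hx.2) τA
      have e4 := measure_inter_add_sdiff (μ := τ) s Am
      rw [e3, add_zero, inter_comm] at e4
      exact e4.symm
    rw [e1, e2, lintegral_countable _ hAs, ← setLIntegral_one, lintegral_countable _ hAs]
    refine tsum_congr fun x => ?_
    rw [one_mul, rρ _ x.2.1]
  have coord : ∀ i, Measurable fun x => ξ x i := fun i =>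
    (measurable_pi_apply i).comp ((WithLp.measurable_ofLp 2 _).comp hξ)
  have ξi : ∀ i, Integrable (fun x => ξ x i) τ := fun i =>
    (integrable_const (1:ℝ)).mono' (coord i).aestronglyMeasurable
    (Eventually.of_forall fun x => (PiLp.norm_apply_le (ξ x) i).trans (hξ1 x))
  have hmem : (fun x => (r x).toReal • ξ x) ∈ {v : Euc d → Euc d |
      (∀ i, Integrable (fun x => v x i) ρ) ∧
      ∀ i, ∀ s : Set (Euc d), MeasurableSet s → q i s = ∫ x in s, v x i ∂ρ} := by
    constructor
    · intro i
      have := ξi i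
      rw [hτρ, integrable_withDensity_iff_integrable_smul' rm
        (Eventually.of_forall rtop)] at this
      simpa using this
    · intro i s hs
      rw [hqξ i s hs, hτρ, setIntegral_withDensity_eq_setIntegral_toReal_smul rm
        (Eventually.of_forall fun x => rtop x) _ hs]
      rfl
  refine (iInf₂_le _ hmem).trans ?_
  set μ := ρ.withDensity fun x => ENNReal.ofReal (‖(r x).toReal • ξ x‖ ^ (1 / α)) with hμ
  have hatom : ∀ x, μ {x} ^ α = ENNReal.ofReal ‖(r x).toReal • ξ x‖ * ρ {x} ^ α := by
    intro x
    rw [hμ, withDensity_apply _ (measurableSet_singleton x), lintegral_singleton,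
      ENNReal.mul_rpow_of_nonneg _ _ hα.le, ENNReal.ofReal_rpow_of_nonneg (by positivity) hα.le,
      ← Real.rpow_mul (norm_nonneg _), one_div_mul_cancel hα.ne', Real.rpow_one]
  have μA : μ Aᶜ = 0 := by
    rw [hμ, withDensity_apply _ Am.compl, setLIntegral_congr_fun (g := fun _ => 0) Am.compl]
    · simp
    · intro x hx
      simp [r0 x hx, hα.ne']
  have bound : ∀ x, x ∈ A → μ {x} ^ α ≤ ρ {x} ^ (α - 1) * τ {x} := by
    intro x hx
    rw [hatom, ← rρ x hx, norm_smul, Real.norm_of_nonneg ENNReal.toReal_nonneg]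
    have e1 : ENNReal.ofReal ((r x).toReal * ‖ξ x‖) ≤ r x := by
      calc _ ≤ ENNReal.ofReal (r x).toReal :=
            ENNReal.ofReal_le_ofReal (mul_le_of_le_one_right ENNReal.toReal_nonneg (hξ1 x))
        _ = r x := ENNReal.ofReal_toReal (rtop x).ne
    have e2 : ρ {x} ^ α = ρ {x} ^ (α - 1) * ρ {x} := by
      conv_rhs => rw [← ENNReal.rpow_one (ρ {x}), ← ENNReal.rpow_mul]
      rw [one_mul, ← ENNReal.rpow_add _ _ hx (measure_ne_top _ _)]
      simp
    rw [e2]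
    calc _ ≤ r x * (ρ {x} ^ (α - 1) * ρ {x}) := by gcongr
      _ = _ := by ring
  unfold Ga
  rw [if_pos ⟨A, Ac, μA⟩]
  have hsub : ∀ x : {x : Euc d // μ {x} ≠ 0}, x.1 ∈ A := by
    intro x
    by_contra hx
    exact x.2 (measure_mono_null (singleton_subset_iff.2 hx) μA)
  calc ∑' x : {x : Euc d // μ {x} ≠ 0}, μ {x.1} ^ α
      ≤ ∑' x : {x : Euc d // μ {x} ≠ 0}, ρ {x.1} ^ (α - 1) * τ {x.1} :=
        ENNReal.tsum_le_tsum fun x => bound _ (hsub x)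
    _ ≤ ∑' x : A, ρ {x.1} ^ (α - 1) * τ {x.1} :=
        ENNReal.tsum_comp_le_tsum_of_injective
          (f := fun x : {x : Euc d // μ {x} ≠ 0} => (⟨x.1, hsub x⟩ : A))
          (fun x y hxy => Subtype.ext (congrArg (fun z : A => z.1) hxy))
          (fun x : A => ρ {x.1} ^ (α - 1) * τ {x.1})
    _ = ∫⁻ x in A, ρ {x} ^ (α - 1) ∂τ :=
        (lintegral_countable (μ := τ) (fun x => ρ {x} ^ (α - 1)) Ac).symm
    _ ≤ ∫⁻ x, ρ {x} ^ (α - 1) ∂τ := setLIntegral_le_lintegral _ _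

/-- Duality upper bound: `F(ρ, q)` is at most the supremum of the pairings of `q` with admissible
members of a dense sequence of continuous fields. -/
theorem Fc_le_of_adm {d : ℕ} {α : ℝ} (hα : 0 < α) (hα' : α < 1)
    {Ω : Set (Euc d)} (hΩ : IsCompact Ω)
    {ρ : Measure (Euc d)} [IsProbabilityMeasure ρ]
    {q : Fin d → SignedMeasure (Euc d)} (hq : ∀ i, Carried Ω (q i))
    {D : ℕ → C(Euc d, Euc d)} (hD : DenseRange D) {S : ℝ≥0∞}
    (hS : ∀ j k, Adm α Ω k (D j) ρ → ENNReal.ofReal (pairing (D j) q) ≤ S) :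
    Fc α ρ q ≤ S := by
  by_cases hST : S = ⊤
  · rw [hST]; exact le_top
  obtain ⟨τ, ξ, fτ, hξ, hτ, hξ1, hξ2, hqξ⟩ := exists_polar hq
  have hk : ∀ k : ℕ, (0:ℝ) < 1 / (k + 1) := fun k => by positivity
  have bpos : ∀ k x, 0 < gconc k ρ x + 1 / (k + 1) := fun k x => by
    have := gconc_nonneg k ρ x; have := hk k; linarith
  have bcont : ∀ k : ℕ, Continuous fun x => gconc k ρ x + 1 / ((k:ℝ) + 1) := fun k =>
    (continuous_gconc k ρ).add continuous_const
  set Φ : ℕ → Euc d → ℝ≥0∞ := fun k x =>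
    ENNReal.ofReal (gconc k ρ x + 1 / (k + 1)) ^ (α - 1) with hΦ
  have Φm : ∀ k, Measurable (Φ k) := fun k =>
    ((bcont k).measurable.ennreal_ofReal).pow_const _
  have lim : ∀ x, Tendsto (fun k => Φ k x) atTop (nhds (ρ {x} ^ (α - 1))) := by
    intro x
    refine (ENNReal.continuous_rpow_const.tendsto _).comp ?_
    have h1 : Tendsto (fun k : ℕ => gconc k ρ x + 1 / ((k:ℝ) + 1)) atTop
        (nhds (ρ.real {x} + 0)) := (tendsto_gconc ρ x).add tendsto_one_div_add_atTop_nhds_zero_nat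
    have h2 := ENNReal.tendsto_ofReal h1
    rwa [add_zero, ofReal_measureReal] at h2
  have hmeas : Measurable fun x => ρ {x} ^ (α - 1) :=
    measurable_of_tendsto_metrizable Φm (tendsto_pi_nhds.2 lim)
  have bound : ∀ k, ∫⁻ x, Φ k x ∂τ ≤ S := by
    intro k
    have h1 := integral_weight_le hα hα' hΩ hq hD k (S := S.toReal)
      (fun j hj => (ENNReal.ofReal_le_iff_le_toReal hST).1 (hS j k hj)) hτ hξ hξ1 hξ2 hqξ
    have fcont : Continuous fun x => (gconc k ρ x + 1 / ((k:ℝ) + 1)) ^ (α - 1) :=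
      (bcont k).rpow_const fun x => Or.inl (bpos k x).ne'
    rw [← ENNReal.ofReal_le_iff_le_toReal hST, ofReal_integral_eq_lintegral_ofReal
      (integrable_of_carried hΩ hτ fcont)
      (Eventually.of_forall fun x => Real.rpow_nonneg (bpos k x).le _)] at h1
    refine le_trans (le_of_eq ?_) h1
    refine lintegral_congr fun x => ?_
    simp only [hΦ]
    rw [ENNReal.ofReal_rpow_of_pos (bpos k x)]
  calc Fc α ρ q ≤ ∫⁻ x, ρ {x} ^ (α - 1) ∂τ := Fc_le_lintegral hα hα' hξ hξ1 hqξ hmeas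
    _ = ∫⁻ x, liminf (fun k => Φ k x) atTop ∂τ :=
        lintegral_congr fun x => (lim x).liminf_eq.symm
    _ ≤ liminf (fun k => ∫⁻ x, Φ k x ∂τ) atTop := lintegral_liminf_le Φm
    _ ≤ S := liminf_le_of_le (by isBoundedDefault) fun b hb => by
        obtain ⟨k, hk⟩ := hb.exists
        exact hk.trans (bound k)

/-- Admissibility for `ρ` gives the hypothesis of the duality lower bound for every measure whose
smoothed point masses exceed those of `ρ` by at most `1/(k+1)`. -/
theorem adm_mass {d : ℕ} {α : ℝ} (hα : 0 < α) (hα' : α < 1) {Ω : Set (Euc d)} {k : ℕ}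
    {ψ : Euc d → Euc d} {ρ ρ' : Measure (Euc d)} [IsProbabilityMeasure ρ']
    (h : Adm α Ω k ψ ρ) (hle : ∀ x ∈ Ω, gconc k ρ' x ≤ gconc k ρ x + 1 / (k + 1)) :
    ∀ x ∈ Ω, ENNReal.ofReal ‖ψ x‖ * ρ' {x} ≤ ρ' {x} ^ α := by
  intro x hx
  have h1 : ρ'.real {x} ≤ gconc k ρ x + 1 / (k + 1) := (mass_le_gconc k ρ' x).trans (hle x hx)
  have h2 : ‖ψ x‖ * ρ'.real {x} ^ (1 - α) ≤ 1 := by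
    refine le_trans ?_ (h x hx)
    gcongr
  have h3 : ‖ψ x‖ * ρ'.real {x} ≤ ρ'.real {x} ^ α := by
    have e : ρ'.real {x} ^ (1 - α) * ρ'.real {x} ^ α = ρ'.real {x} := by
      rw [← Real.rpow_add_of_nonneg measureReal_nonneg (by linarith) hα.le]; simp
    calc ‖ψ x‖ * ρ'.real {x} = (‖ψ x‖ * ρ'.real {x} ^ (1 - α)) * ρ'.real {x} ^ α := by
          rw [mul_assoc, e]
      _ ≤ 1 * ρ'.real {x} ^ α := by gcongr
      _ = _ := one_mul _
  have h4 := ENNReal.ofReal_le_ofReal h3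
  rwa [ENNReal.ofReal_mul (norm_nonneg _), ← ENNReal.ofReal_rpow_of_nonneg measureReal_nonneg hα.le,
    ofReal_measureReal] at h4

/-! ### Weak convergence in time -/

/-- Uniformly bounded functions that converge against continuous test functions also converge
against indicators of measurable sets: approximate the indicator by a continuous function in
`L¹((1 + |h|) dt)`. -/
theorem tendsto_setIntegral_of_test {g : ℕ → ℝ → ℝ} {h : ℝ → ℝ} {C : ℝ}
    (hm : ∀ n, AEStronglyMeasurable (g n) (volume.restrict (Icc (0:ℝ) 1)))
    (hb : ∀ n, ∀ t ∈ Icc (0:ℝ) 1, |g n t| ≤ C)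
    (hi : IntegrableOn h (Icc (0:ℝ) 1))
    (ht : ∀ θ : ℝ → ℝ, Continuous θ → Tendsto (fun n => ∫ t in (0:ℝ)..1, θ t * g n t) atTop
      (nhds (∫ t in (0:ℝ)..1, θ t * h t)))
    {A : Set ℝ} (hA : MeasurableSet A) (hA1 : A ⊆ Icc 0 1) :
    Tendsto (fun n => ∫ t in A, g n t) atTop (nhds (∫ t in A, h t)) := by
  set μ : Measure ℝ := volume.restrict (Icc (0:ℝ) 1) with hμ
  have hC : 0 ≤ C := (abs_nonneg _).trans (hb 0 0 (by simp))
  have hgi : ∀ n, Integrable (g n) μ := fun n =>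
    (integrable_const C).mono' (hm n) (ae_restrict_of_forall_mem measurableSet_Icc (hb n))
  have hi' : Integrable h μ := hi
  set ν : Measure ℝ := μ.withDensity fun t => ‖h t‖ₑ with hν
  have fν : IsFiniteMeasure ν := isFiniteMeasure_withDensity hi'.2.ne
  have conv : ∀ f : ℝ → ℝ, ∫ t in (0:ℝ)..1, f t = ∫ t, f t ∂μ := fun f => by
    rw [intervalIntegral.integral_of_le zero_le_one, hμ, integral_Icc_eq_integral_Ioc]
  have setI : ∀ f : ℝ → ℝ, ∫ t in A, f t = ∫ t, A.indicator 1 t * f t ∂μ := fun f => by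
    have e : (fun t => A.indicator (1 : ℝ → ℝ) t * f t) = A.indicator f := by
      ext t; by_cases ht : t ∈ A <;> simp [ht]
    rw [e, integral_indicator hA, hμ, Measure.restrict_restrict hA, inter_eq_left.2 hA1]
  rw [Metric.tendsto_atTop]
  intro ε hε
  set δ : ℝ := ε / (2 * (C + 2)) with hδ
  have δ0 : 0 < δ := by positivity
  have iA : Integrable (A.indicator (1 : ℝ → ℝ)) (μ + ν) :=
    (integrable_const (1:ℝ)).indicator hA
  obtain ⟨θ, hθs, hθ, hθc, hθi⟩ := iA.exists_hasCompactSupport_integral_sub_le δ0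
  set r : ℝ → ℝ := fun t => A.indicator 1 t - θ t with hr
  obtain ⟨B, hB⟩ := hθs.exists_bound_of_continuous hθc
  have rmeas : ∀ κ : Measure ℝ, AEStronglyMeasurable r κ := fun κ =>
    (((measurable_one.indicator hA).sub hθc.measurable)).aestronglyMeasurable
  have rb : ∀ t, ‖r t‖ ≤ 1 + B := fun t => by
    refine (norm_sub_le _ _).trans (add_le_add ?_ (hB t))
    by_cases ht : t ∈ A <;> simp [ht]
  have θmul : ∀ f : ℝ → ℝ, Integrable f μ → Integrable (fun t => θ t * f t) μ := fun f hf =>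
    hf.bdd_mul hθc.aestronglyMeasurable (Eventually.of_forall hB)
  have rmul : ∀ f : ℝ → ℝ, Integrable f μ → Integrable (fun t => r t * f t) μ := fun f hf =>
    hf.bdd_mul (rmeas _) (Eventually.of_forall rb)
  have diff : ∀ f : ℝ → ℝ, Integrable f μ →
      ∫ t in A, f t = ∫ t, r t * f t ∂μ + ∫ t, θ t * f t ∂μ := fun f hf => by
    rw [setI, ← integral_add (rmul f hf) (θmul f hf)]
    congr 1; ext t; simp only [hr]; ring
  have ri : ∀ κ : Measure ℝ, IsFiniteMeasure κ → Integrable r κ := fun κ _ =>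
    (integrable_const (1 + B)).mono' (rmeas _) (Eventually.of_forall rb)
  have hsum : ∫ t, ‖r t‖ ∂μ + ∫ t, ‖r t‖ ∂ν ≤ δ := by
    rw [← integral_add_measure (ri μ inferInstance).norm (ri ν fν).norm]
    exact hθ
  have p1 : 0 ≤ ∫ t, ‖r t‖ ∂μ := integral_nonneg fun _ => norm_nonneg _
  have p2 : 0 ≤ ∫ t, ‖r t‖ ∂ν := integral_nonneg fun _ => norm_nonneg _
  have b1 : ∀ n, |∫ t, r t * g n t ∂μ| ≤ C * δ := fun n => by
    calc |∫ t, r t * g n t ∂μ| ≤ ∫ t, ‖r t * g n t‖ ∂μ := by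
          rw [← Real.norm_eq_abs]; exact norm_integral_le_integral_norm _
      _ ≤ ∫ t, C * ‖r t‖ ∂μ := by
          refine integral_mono_ae (rmul _ (hgi n)).norm ((ri μ inferInstance).norm.const_mul C)
            (ae_restrict_of_forall_mem measurableSet_Icc fun t ht => ?_)
          simp only [norm_mul]
          rw [mul_comm]
          exact mul_le_mul_of_nonneg_right (hb n t ht) (norm_nonneg _)
      _ = C * ∫ t, ‖r t‖ ∂μ := integral_const_mul _ _
      _ ≤ C * δ := by gcongr; linarith
  have b2 : |∫ t, r t * h t ∂μ| ≤ δ := by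
    calc |∫ t, r t * h t ∂μ| ≤ ∫ t, ‖r t * h t‖ ∂μ := by
          rw [← Real.norm_eq_abs]; exact norm_integral_le_integral_norm _
      _ = ∫ t, ‖r t‖ ∂ν := by
          rw [hν, integral_withDensity_eq_integral_toReal_smul₀ hi'.1.enorm
            (Eventually.of_forall fun t => enorm_lt_top)]
          congr 1; ext t
          rw [norm_mul, toReal_enorm, smul_eq_mul, mul_comm]
      _ ≤ δ := by linarith
  obtain ⟨N, hN⟩ := Metric.tendsto_atTop.1 (ht θ hθc) (ε / 2) (half_pos hε)
  refine ⟨N, fun n hn => ?_⟩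
  have b3 := hN n hn
  rw [conv, conv, Real.dist_eq] at b3
  rw [Real.dist_eq, diff _ (hgi n), diff _ hi']
  have e : (C + 1) * δ < ε / 2 := by
    rw [hδ]
    rw [mul_div_assoc', div_lt_div_iff₀ (by positivity) (by norm_num)]
    nlinarith
  have := b1 n
  rw [abs_le] at this b2
  rw [abs_lt] at b3 ⊢
  constructor <;> linarith

/-- The du Bois-Reymond lemma: if `u' = w` in the sense of distributions on `(0,1)`, then `u` is a
primitive of `w`. -/
theorem eq_const_add_integral {u w : ℝ → ℝ} (hu : ContinuousOn u (Icc 0 1))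
    (hw : IntegrableOn w (Icc 0 1))
    (h : ∀ θ : ℝ → ℝ, ContDiff ℝ 1 θ → θ 0 = 0 → θ 1 = 0 →
      ∫ t in (0:ℝ)..1, (deriv θ t * u t + θ t * w t) = 0) :
    ∀ t ∈ Icc (0:ℝ) 1,
      u t = (∫ s in (0:ℝ)..1, (u s - ∫ r in (0:ℝ)..s, w r)) + ∫ r in (0:ℝ)..t, w r := by
  set W : ℝ → ℝ := fun t => ∫ r in (0:ℝ)..t, w r with hW
  have wi : IntervalIntegrable w volume 0 1 := by
    rwa [intervalIntegrable_iff_integrableOn_Icc_of_le zero_le_one]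
  have u01 : uIcc (0:ℝ) 1 = Icc 0 1 := uIcc_of_le zero_le_one
  have Wac : AbsolutelyContinuousOnInterval W 0 1 :=
    wi.absolutelyContinuousOnInterval_intervalIntegral (by simp)
  have Wc : ContinuousOn W (Icc 0 1) := u01 ▸ Wac.continuousOn
  have gc : ContinuousOn (fun t => u t - W t) (Icc 0 1) := hu.sub Wc
  set G : ℝ → ℝ := IccExtend zero_le_one ((Icc (0:ℝ) 1).domRestrict fun t => u t - W t) with hG
  have Gc : Continuous G := (continuousOn_iff_continuous_domRestrict.1 gc).Icc_extend'
  have Ge : ∀ t ∈ Icc (0:ℝ) 1, G t = u t - W t := fun t ht => by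
    rw [hG, IccExtend_of_mem _ _ ht]; rfl
  set c : ℝ := ∫ s in (0:ℝ)..1, G s with hc
  have hc' : ∫ s in (0:ℝ)..1, (u s - W s) = c := by
    refine intervalIntegral.integral_congr fun t ht => ?_
    rw [u01] at ht
    exact (Ge t ht).symm
  have Hc : Continuous fun t => G t - c := Gc.sub continuous_const
  set θ : ℝ → ℝ := fun t => ∫ s in (0:ℝ)..t, (G s - c) with hθ
  have θd : ∀ t, HasDerivAt θ (G t - c) t := fun t =>
    intervalIntegral.integral_hasDerivAt_right (Hc.intervalIntegrable _ _)
      (Hc.stronglyMeasurableAtFilter _ _) Hc.continuousAt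
  have θd' : deriv θ = fun t => G t - c := funext fun t => (θd t).deriv
  have θ1 : ContDiff ℝ 1 θ := by
    rw [contDiff_one_iff_deriv, θd']
    exact ⟨fun t => (θd t).differentiableAt, Hc⟩
  have t0 : θ 0 = 0 := by simp [hθ]
  have t1 : θ 1 = 0 := by
    simp only [hθ]
    rw [intervalIntegral.integral_sub (Gc.intervalIntegrable _ _) (by simp)]
    simp [hc]
  have h1 := h θ θ1 t0 t1
  have ibp := AbsolutelyContinuousOnInterval.integral_mul_deriv_eq_deriv_mul
    (θ1.contDiffOn.absolutelyContinuousOnInterval (a := 0) (b := 1)) Wac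
  rw [t0, t1, zero_mul, zero_mul, sub_zero, zero_sub] at ibp
  have e1 : ∫ t in (0:ℝ)..1, θ t * deriv W t = ∫ t in (0:ℝ)..1, θ t * w t := by
    refine intervalIntegral.integral_congr_ae ?_
    filter_upwards [wi.ae_hasDerivAt_integral] with t ht hmem
    rw [(ht (uIoc_subset_uIcc hmem) 0 (by simp)).deriv]
  have θc : Continuous θ := θ1.continuous
  have i1 : IntervalIntegrable (fun t => deriv θ t * u t) volume 0 1 := by
    rw [θd']
    exact (Hc.continuousOn.mul (u01 ▸ hu)).intervalIntegrable
  have i2 : IntervalIntegrable (fun t => θ t * w t) volume 0 1 :=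
    wi.continuousOn_mul θc.continuousOn
  have i3 : IntervalIntegrable (fun t => deriv θ t * W t) volume 0 1 := by
    rw [θd']
    exact (Hc.continuousOn.mul (u01 ▸ Wc)).intervalIntegrable
  rw [intervalIntegral.integral_add i1 i2, ← e1, ibp, ← sub_eq_add_neg,
    ← intervalIntegral.integral_sub i1 i3] at h1
  have e2 : ∫ t in (0:ℝ)..1, (G t - c) ^ 2 = 0 := by
    have e3 : ∫ t in (0:ℝ)..1, (deriv θ t * u t - deriv θ t * W t) =
        ∫ t in (0:ℝ)..1, ((G t - c) ^ 2 + c * (G t - c)) := by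
      refine intervalIntegral.integral_congr fun t ht => ?_
      rw [u01] at ht
      simp only [θd']
      rw [← mul_sub, ← Ge t ht]; ring
    have e4 : ∫ t in (0:ℝ)..1, (G t - c) = 0 := t1
    have i4 : IntervalIntegrable (fun t => (G t - c) ^ 2) volume 0 1 :=
      (Hc.pow 2).intervalIntegrable _ _
    have i5 : IntervalIntegrable (fun t => c * (G t - c)) volume 0 1 :=
      (Hc.intervalIntegrable _ _).const_mul c
    rw [e3, intervalIntegral.integral_add i4 i5, intervalIntegral.integral_const_mul, e4,
      mul_zero, add_zero] at h1
    exact h1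
  intro t ht
  rw [hc']
  by_contra hne
  have hpos : 0 < (G t - c) ^ 2 := by
    rw [Ge t ht]
    have : u t - W t - c ≠ 0 := fun h0 => hne (by simp only [hW] at h0; linarith)
    positivity
  have := intervalIntegral.integral_pos zero_lt_one (Hc.pow 2).continuousOn
    (fun x _ => sq_nonneg _) ⟨t, ht, hpos⟩
  exact this.ne' e2

/-! ### Consequences of the continuity equation and of `τ`-convergence -/

theorem integrableOn_sInt {d : ℕ} {Ω : Set (Euc d)} (hΩ : IsCompact Ω) {ρ : ℝ → Measure (Euc d)}
    {q : ℝ → Fin d → SignedMeasure (Euc d)} (h : MemD Ω ρ q) {f : Euc d → ℝ} (hf : Continuous f)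
    (i : Fin d) : IntegrableOn (fun t => sInt f (q t i)) (Icc (0:ℝ) 1) := by
  obtain ⟨-, -, hc, hm, hfin, -⟩ := h
  have am := aemeasurable_sInt hΩ (hm i) (fun t ht => hc t ht i) hf
  obtain ⟨C, hC⟩ := hΩ.exists_bound_of_continuousOn hf.continuousOn
  have hC' : ∀ x ∈ Ω, |f x| ≤ max C 0 := fun x hx => (hC x hx).trans (le_max_left _ _)
  refine ⟨am.aestronglyMeasurable, ?_⟩
  calc ∫⁻ t in Icc (0:ℝ) 1, ‖sInt f (q t i)‖ₑ
      ≤ ∫⁻ t in Icc (0:ℝ) 1, ENNReal.ofReal (max C 0) * tvVec (q t) := by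
        refine lintegral_mono_ae (ae_restrict_of_forall_mem measurableSet_Icc fun t ht => ?_)
        rw [Real.enorm_eq_ofReal_abs]
        refine (ENNReal.ofReal_le_ofReal (abs_sInt_le (hc t ht i) hC')).trans ?_
        rw [ENNReal.ofReal_mul (le_max_right _ _)]
        gcongr
        exact tmass_le_tvVec _ i
    _ = ENNReal.ofReal (max C 0) * ∫⁻ t in Icc (0:ℝ) 1, tvVec (q t) :=
        lintegral_const_mul' _ _ ENNReal.ofReal_ne_top
    _ < ⊤ := ENNReal.mul_lt_top ENNReal.ofReal_lt_top hfin

theorem integrableOn_pairing {d : ℕ} {Ω : Set (Euc d)} (hΩ : IsCompact Ω)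
    {ρ : ℝ → Measure (Euc d)} {q : ℝ → Fin d → SignedMeasure (Euc d)} (h : MemD Ω ρ q)
    {ψ : Euc d → Euc d} (hψ : Continuous ψ) :
    IntegrableOn (fun t => pairing ψ (q t)) (Icc (0:ℝ) 1) := by
  unfold pairing
  exact integrable_finsetSum _ fun i _ => integrableOn_sInt hΩ h (continuous_coord hψ i) i

/-- Testing the flux against `θ(t) ψ(x)`, as a sum over the coordinates of `ψ`. -/
theorem integral_mul_pairing {d : ℕ} {Ω : Set (Euc d)} (hΩ : IsCompact Ω)
    {ρ : ℝ → Measure (Euc d)} {q : ℝ → Fin d → SignedMeasure (Euc d)} (h : MemD Ω ρ q)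
    {ψ : Euc d → Euc d} (hψ : Continuous ψ) {θ : ℝ → ℝ} (hθ : Continuous θ) :
    ∫ t in (0:ℝ)..1, θ t * pairing ψ (q t) =
      ∑ i, ∫ t in (0:ℝ)..1, sInt (fun x => θ t * ψ x i) (q t i) := by
  rw [← intervalIntegral.integral_finsetSum]
  · refine intervalIntegral.integral_congr fun t _ => ?_
    simp only [pairing, Finset.mul_sum, sInt_const_mul]
  · intro i _
    simp only [sInt_const_mul]
    refine IntervalIntegrable.continuousOn_mul ?_ hθ.continuousOn
    rw [intervalIntegrable_iff_integrableOn_Icc_of_le zero_le_one]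
    exact integrableOn_sInt hΩ h (continuous_coord hψ i) i

theorem exists_pairing_bound {d : ℕ} {α : ℝ} (hα : 0 < α) (hα' : α < 1) {Ω : Set (Euc d)}
    (hΩ : IsCompact Ω) {ρn : ℕ → ℝ → Measure (Euc d)}
    {qn : ℕ → ℝ → Fin d → SignedMeasure (Euc d)} {ρ : ℝ → Measure (Euc d)}
    {q : ℝ → Fin d → SignedMeasure (Euc d)} (hn : ∀ n, MemD Ω (ρn n) (qn n))
    (hτ : TauConv α ρn qn ρ q)
    {ψ : Euc d → Euc d} (hψ : Continuous ψ) :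
    ∃ C : ℝ, 0 ≤ C ∧ ∀ n, ∀ t ∈ Icc (0:ℝ) 1, |pairing ψ (qn n t)| ≤ C := by
  obtain ⟨-, -, M, hM, hF⟩ := hτ
  obtain ⟨C, hC⟩ := hΩ.exists_bound_of_continuousOn hψ.continuousOn
  refine ⟨max C 1 * M.toReal, by positivity, fun n t ht => ?_⟩
  have := ((hn n).1 t ht).1
  exact abs_pairing_le hα hα' hΩ ((hn n).1 t ht).2 ((hn n).2.2.1 t ht) hψ
    (lt_of_lt_of_le one_pos (le_max_right _ _))
    (fun x hx => (hC x hx).trans (le_max_left _ _)) hM (hF n t ht)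

/-- The pairings with a fixed field converge weakly in time, tested on measurable sets. -/
theorem tendsto_setIntegral_pairing {d : ℕ} {α : ℝ} (hα : 0 < α) (hα' : α < 1) {Ω : Set (Euc d)}
    (hΩ : IsCompact Ω) {ρn : ℕ → ℝ → Measure (Euc d)}
    {qn : ℕ → ℝ → Fin d → SignedMeasure (Euc d)} {ρ : ℝ → Measure (Euc d)}
    {q : ℝ → Fin d → SignedMeasure (Euc d)} (hn : ∀ n, MemD Ω (ρn n) (qn n))
    (h : MemD Ω ρ q) (hτ : TauConv α ρn qn ρ q)
    {ψ : Euc d → Euc d} (hψ : Continuous ψ) {A : Set ℝ}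
    (hA : MeasurableSet A) (hA1 : A ⊆ Icc 0 1) :
    Tendsto (fun n => ∫ t in A, pairing ψ (qn n t)) atTop (nhds (∫ t in A, pairing ψ (q t))) := by
  obtain ⟨C, -, hC⟩ := exists_pairing_bound hα hα' hΩ hn hτ hψ
  refine tendsto_setIntegral_of_test (fun n => (integrableOn_pairing hΩ (hn n) hψ).1) hC
    (integrableOn_pairing hΩ h hψ) (fun θ hθ => ?_) hA hA1
  simp only [integral_mul_pairing hΩ (hn _) hψ hθ, integral_mul_pairing hΩ h hψ hθ]
  refine tendsto_finsetSum _ fun i _ => ?_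
  have hc := continuous_coord hψ i
  exact hτ.2.1 i (fun p => θ p.1 * ψ p.2 i)
    ((hθ.comp continuous_fst).mul (hc.comp continuous_snd))

/-- The gradient of `η`, as a vector field. -/
noncomputable def gradField {d : ℕ} (η : Euc d → ℝ) (x : Euc d) : Euc d :=
  WithLp.toLp 2 fun i => fderiv ℝ η x (EuclideanSpace.single i 1)

theorem continuous_gradField {d : ℕ} {η : Euc d → ℝ} (hη : ContDiff ℝ 1 η) :
    Continuous (gradField η) := by
  refine (PiLp.continuous_toLp 2 _).comp (continuous_pi fun i => ?_)
  exact (hη.continuous_fderiv (by simp)).clm_apply continuous_const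

/-- The continuity equation tested on `θ(t) η(x)`. -/
theorem contEq_prod {d : ℕ} {Ω : Set (Euc d)} {ρ : ℝ → Measure (Euc d)}
    {q : ℝ → Fin d → SignedMeasure (Euc d)} (h : MemD Ω ρ q)
    {η : Euc d → ℝ} (hη : ContDiff ℝ 1 η) {θ : ℝ → ℝ} (hθ : ContDiff ℝ 1 θ) (h0 : θ 0 = 0)
    (h1 : θ 1 = 0) :
    ∫ t in (0:ℝ)..1,
      (deriv θ t * (∫ x, η x ∂(ρ t)) + θ t * pairing (gradField η) (q t)) = 0 := by
  have key := h.2.2.2.2.2 (fun p => θ p.1 * η p.2)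
    ((hθ.comp contDiff_fst).mul (hη.comp contDiff_snd)) (by simp [h0]) (by simp [h1])
  refine Eq.trans ?_ key
  refine intervalIntegral.integral_congr fun t _ => ?_
  have fd : ∀ x : Euc d, ∀ v : ℝ × Euc d, fderiv ℝ (fun p : ℝ × Euc d => θ p.1 * η p.2) (t, x) v =
      θ t * fderiv ℝ η x v.2 + deriv θ t * v.1 * η x := by
    intro x v
    have e1 : HasFDerivAt (fun p : ℝ × Euc d => θ p.1)
        ((fderiv ℝ θ t).comp (ContinuousLinearMap.fst ℝ ℝ (Euc d))) (t, x) :=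
      HasFDerivAt.comp (g := θ) (t, x) ((hθ.differentiable (by simp)) t).hasFDerivAt
        hasFDerivAt_fst
    have e2 : HasFDerivAt (fun p : ℝ × Euc d => η p.2)
        ((fderiv ℝ η x).comp (ContinuousLinearMap.snd ℝ ℝ (Euc d))) (t, x) :=
      HasFDerivAt.comp (g := η) (t, x) ((hη.differentiable (by simp)) x).hasFDerivAt
        hasFDerivAt_snd
    have e3 := (e1.mul e2).fderiv
    have e4 : fderiv ℝ θ t v.1 = deriv θ t * v.1 := by
      rw [fderiv_eq_smul_deriv, smul_eq_mul, mul_comm]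
    change fderiv ℝ ((fun p : ℝ × Euc d => θ p.1) * (fun p : ℝ × Euc d => η p.2)) (t, x) v = _
    rw [e3]
    simp [e4]
    ring
  simp only [fd, map_zero, mul_zero, zero_add, add_zero, mul_one, zero_mul, integral_const_mul,
    sInt_const_mul, pairing, gradField, Finset.mul_sum]

/-- The densities converge at every time: `∫ η dρₜ` is a primitive of the pairing of `∇η` with the
flux, whose primitives converge pointwise; the constants of integration converge because the
densities converge on average in time. -/
theorem tendsto_integral_density {d : ℕ} {α : ℝ} (hα : 0 < α) (hα' : α < 1) {Ω : Set (Euc d)}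
    (hΩ : IsCompact Ω) {ρn : ℕ → ℝ → Measure (Euc d)}
    {qn : ℕ → ℝ → Fin d → SignedMeasure (Euc d)} {ρ : ℝ → Measure (Euc d)}
    {q : ℝ → Fin d → SignedMeasure (Euc d)} (hn : ∀ n, MemD Ω (ρn n) (qn n))
    (h : MemD Ω ρ q) (hτ : TauConv α ρn qn ρ q)
    {η : Euc d → ℝ} (hη : ContDiff ℝ 1 η) {t : ℝ}
    (ht : t ∈ Icc (0:ℝ) 1) :
    Tendsto (fun n => ∫ x, η x ∂(ρn n t)) atTop (nhds (∫ x, η x ∂(ρ t))) := by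
  have gc := continuous_gradField hη
  have rep : ∀ (ρ : ℝ → Measure (Euc d)) (q : ℝ → Fin d → SignedMeasure (Euc d)), MemD Ω ρ q →
      ∀ t ∈ Icc (0:ℝ) 1, ∫ x, η x ∂(ρ t) =
        (∫ s in (0:ℝ)..1, ∫ x, η x ∂(ρ s)) -
          (∫ s in (0:ℝ)..1, ∫ r in (0:ℝ)..s, pairing (gradField η) (q r)) +
          ∫ r in (0:ℝ)..t, pairing (gradField η) (q r) := by
    intro ρ q h t ht
    have hu := h.2.1 η hη.continuous
    have hw := integrableOn_pairing hΩ h gc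
    have wi : IntervalIntegrable (fun t => pairing (gradField η) (q t)) volume 0 1 := by
      rwa [intervalIntegrable_iff_integrableOn_Icc_of_le zero_le_one]
    have u01 : uIcc (0:ℝ) 1 = Icc 0 1 := uIcc_of_le zero_le_one
    rw [eq_const_add_integral hu hw (fun θ hθ h0 h1 => contEq_prod h hη hθ h0 h1) t ht,
      intervalIntegral.integral_sub]
    · exact (u01 ▸ hu).intervalIntegrable
    · exact (wi.absolutelyContinuousOnInterval_intervalIntegral
        (by simp)).continuousOn.intervalIntegrable
  have prim : ∀ s ∈ Icc (0:ℝ) 1,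
      Tendsto (fun n => ∫ r in (0:ℝ)..s, pairing (gradField η) (qn n r)) atTop
        (nhds (∫ r in (0:ℝ)..s, pairing (gradField η) (q r))) := by
    intro s hs
    simp only [intervalIntegral.integral_of_le hs.1]
    exact tendsto_setIntegral_pairing hα hα' hΩ hn h hτ gc measurableSet_Ioc
      fun r hr => ⟨hr.1.le, hr.2.trans hs.2⟩
  obtain ⟨C, hC0, hC⟩ := exists_pairing_bound hα hα' hΩ hn hτ gc
  have avg : Tendsto (fun n => ∫ s in (0:ℝ)..1, ∫ r in (0:ℝ)..s, pairing (gradField η) (qn n r))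
      atTop (nhds (∫ s in (0:ℝ)..1, ∫ r in (0:ℝ)..s, pairing (gradField η) (q r))) := by
    have I01 : uIoc (0:ℝ) 1 = Ioc 0 1 := uIoc_of_le zero_le_one
    refine intervalIntegral.tendsto_integral_filter_of_dominated_convergence (fun _ => C)
      (Eventually.of_forall fun n => ?_) (Eventually.of_forall fun n => ?_) (by simp) ?_
    · have wi : IntervalIntegrable (fun t => pairing (gradField η) (qn n t)) volume 0 1 := by
        rw [intervalIntegrable_iff_integrableOn_Icc_of_le zero_le_one]
        exact integrableOn_pairing hΩ (hn n) gc
      have wc := (wi.absolutelyContinuousOnInterval_intervalIntegral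
        (c := 0) (by simp)).continuousOn.intervalIntegrable (μ := volume)
      rw [I01]
      exact wc.1.aestronglyMeasurable
    · refine Eventually.of_forall fun s hs => ?_
      rw [I01] at hs
      refine (intervalIntegral.norm_integral_le_of_norm_le_const (C := C) fun r hr => ?_).trans ?_
      · rw [uIoc_of_le hs.1.le] at hr
        exact hC n r ⟨hr.1.le, hr.2.trans hs.2⟩
      · rw [sub_zero, abs_of_pos hs.1]
        exact mul_le_of_le_one_right hC0 hs.2
    · refine Eventually.of_forall fun s hs => ?_
      rw [I01] at hs
      exact prim s ⟨hs.1.le, hs.2⟩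
  rw [rep ρ q h t ht]
  simp only [fun n => rep (ρn n) (qn n) (hn n) t ht]
  exact ((hτ.1 (fun p => η p.2) (hη.continuous.comp continuous_snd)).sub avg).add (prim t ht)

/-- The smoothed point masses converge uniformly on `Ω`, at every time. -/
theorem eventually_gconc_le {d : ℕ} {α : ℝ} (hα : 0 < α) (hα' : α < 1) {Ω : Set (Euc d)}
    (hΩ : IsCompact Ω) {ρn : ℕ → ℝ → Measure (Euc d)}
    {qn : ℕ → ℝ → Fin d → SignedMeasure (Euc d)} {ρ : ℝ → Measure (Euc d)}
    {q : ℝ → Fin d → SignedMeasure (Euc d)} (hn : ∀ n, MemD Ω (ρn n) (qn n))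
    (h : MemD Ω ρ q) (hτ : TauConv α ρn qn ρ q)
    (k : ℕ) {t : ℝ} (ht : t ∈ Icc (0:ℝ) 1) :
    ∀ᶠ n in atTop, ∀ x ∈ Ω, gconc k (ρn n t) x ≤ gconc k (ρ t) x + 1 / (k + 1) := by
  set ε : ℝ := 1 / (k + 1) with hε
  have ε0 : 0 < ε := by positivity
  have lim : ∀ x, Tendsto (fun n => gconc k (ρn n t) x) atTop (nhds (gconc k (ρ t) x)) := by
    intro x
    refine tendsto_integral_density hα hα' hΩ hn h hτ
      (η := fun y => Real.exp (-(k * ‖x - y‖ ^ 2))) ?_ ht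
    exact ((contDiff_const.mul ((contDiff_const.sub contDiff_id).norm_sq ℝ)).neg).exp
  -- The kernel is uniformly continuous on `Ω × Ω`, so the smoothed masses are equicontinuous.
  have uc : UniformContinuousOn
      (fun p : Euc d × Euc d => Real.exp (-(k * ‖p.1 - p.2‖ ^ 2))) (Ω ×ˢ Ω) :=
    (hΩ.prod hΩ).uniformContinuousOn_of_continuous (by fun_prop)
  obtain ⟨δ, δ0, hδ⟩ := Metric.uniformContinuousOn_iff.1 uc (ε / 3) (by positivity)
  have osc : ∀ κ : Measure (Euc d), IsProbabilityMeasure κ → κ Ωᶜ = 0 → ∀ x ∈ Ω, ∀ z ∈ Ω,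
      dist x z < δ → |gconc k κ x - gconc k κ z| ≤ ε / 3 := by
    intro κ hκ hκΩ x hx z hz hxz
    unfold gconc
    rw [← integral_sub (integrable_kernel k κ x) (integrable_kernel k κ z)]
    have := norm_integral_le_of_norm_le_const (μ := κ) (C := ε / 3)
      (f := fun y => Real.exp (-(k * ‖x - y‖ ^ 2)) - Real.exp (-(k * ‖z - y‖ ^ 2)))
      ((ae_mem_of_compl_null hκΩ).mono fun y hy => by
        have := hδ (x, y) ⟨hx, hy⟩ (z, y) ⟨hz, hy⟩ (by
          rw [Prod.dist_eq, dist_self]; exact max_lt hxz δ0)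
        exact this.le)
    simpa using this
  obtain ⟨s, hsΩ, hsf, hs⟩ := hΩ.finite_cover_balls δ0
  have ev : ∀ᶠ n in atTop, ∀ z ∈ s, gconc k (ρn n t) z < gconc k (ρ t) z + ε / 3 :=
    (hsf.eventually_all).2 fun z _ => (lim z).eventually_lt_const (by linarith)
  filter_upwards [ev] with n hnn x hx
  obtain ⟨z, hz, hxz⟩ := mem_iUnion₂.1 (hs hx)
  have o1 := osc (ρn n t) ((hn n).1 t ht).1 ((hn n).1 t ht).2 x hx z (hsΩ hz) hxz
  have o2 := osc (ρ t) (h.1 t ht).1 (h.1 t ht).2 x hx z (hsΩ hz) hxz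
  have := hnn z hz
  rw [abs_le] at o1 o2
  linarith [o1.2, o2.1]

/-! ### Localized lower semicontinuity -/

/-- `H` is a lower bound for the sequence `F` on every measurable set of times:
`∫_A H ≤ liminf ∫_A F n` for all measurable `A ⊆ [0,1]`. Localization in `A` is what makes this
stable under suprema. -/
def LscOn (H : ℝ → ℝ≥0∞) (F : ℕ → ℝ → ℝ≥0∞) : Prop :=
  ∀ A : Set ℝ, MeasurableSet A → A ⊆ Icc 0 1 →
    ∫⁻ t in A, H t ≤ liminf (fun n => ∫⁻ t in A, F n t) atTop

theorem liminf_add_liminf_le (u v : ℕ → ℝ≥0∞) :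
    liminf u atTop + liminf v atTop ≤ liminf (fun n => u n + v n) atTop := by
  simp only [liminf_eq_iSup_iInf_of_nat]
  rw [ENNReal.iSup_add_iSup_of_monotone]
  · exact iSup_mono fun n => le_iInf₂ fun i hi =>
      add_le_add (iInf₂_le i hi) (iInf₂_le i hi)
  · exact fun a b hab => le_iInf₂ fun i hi => iInf₂_le i (hab.trans hi)
  · exact fun a b hab => le_iInf₂ fun i hi => iInf₂_le i (hab.trans hi)

theorem LscOn.sup {H S : ℝ → ℝ≥0∞} {F : ℕ → ℝ → ℝ≥0∞} (hH : LscOn H F) (hS : LscOn S F)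
    (mH : Measurable H) (mS : Measurable S) : LscOn (H ⊔ S) F := by
  intro A hA hA1
  have mB : MeasurableSet {t | S t ≤ H t} := measurableSet_le mS mH
  rw [← lintegral_inter_add_sdiff _ A mB]
  simp only [← fun n => lintegral_inter_add_sdiff (μ := volume) (F n) A mB]
  refine le_trans (add_le_add ?_ ?_) (liminf_add_liminf_le _ _)
  · refine le_trans (le_of_eq ?_) (hH _ (hA.inter mB) (inter_subset_left.trans hA1))
    exact setLIntegral_congr_fun (hA.inter mB) fun t ht => sup_eq_left.2 ht.2
  · refine le_trans (le_of_eq ?_) (hS _ (hA.diff mB) (sdiff_subset.trans hA1))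
    exact setLIntegral_congr_fun (hA.diff mB) fun t ht => sup_eq_right.2 (not_le.1 ht.2).le

theorem LscOn.iSup {H : ℕ → ℝ → ℝ≥0∞} {F : ℕ → ℝ → ℝ≥0∞} (hH : ∀ n, LscOn (H n) F)
    (mH : ∀ n, Measurable (H n)) : LscOn (⨆ n, H n) F := by
  have key : ∀ n, LscOn (partialSups H n) F ∧ Measurable (partialSups H n) := by
    intro n
    induction n with
    | zero => rw [partialSups_zero]; exact ⟨hH 0, mH 0⟩
    | succ n ih =>
      rw [partialSups_add_one]
      exact ⟨ih.1.sup (hH _) ih.2 (mH _), ih.2.sup (mH _)⟩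
  intro A hA hA1
  rw [← iSup_partialSups_eq]
  simp only [iSup_apply]
  rw [lintegral_iSup (fun n => (key n).2) (partialSups H).monotone]
  exact iSup_le fun n => (key n).1 A hA hA1

theorem isClosed_forall_le {d : ℕ} {Ω : Set (Euc d)} {f g : Euc d → ℝ → ℝ}
    (hf : ∀ x, ContinuousOn (f x) (Icc (0:ℝ) 1)) (hg : ∀ x, ContinuousOn (g x) (Icc (0:ℝ) 1)) :
    IsClosed {t | t ∈ Icc (0:ℝ) 1 ∧ ∀ x ∈ Ω, f x t ≤ g x t} := by
  have e : {t | t ∈ Icc (0:ℝ) 1 ∧ ∀ x ∈ Ω, f x t ≤ g x t} =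
      Icc 0 1 ∩ ⋂ x ∈ Ω, {t | t ∈ Icc (0:ℝ) 1 ∧ f x t ≤ g x t} := by
    ext t
    simp only [mem_inter_iff, mem_iInter]
    exact ⟨fun h => ⟨h.1, fun x hx => ⟨h.1, h.2 x hx⟩⟩, fun h => ⟨h.1, fun x hx => (h.2 x hx).2⟩⟩
  rw [e]
  exact isClosed_Icc.inter (isClosed_biInter fun x _ => isClosed_Icc.isClosed_le (hf x) (hg x))

theorem continuousOn_gconc {d : ℕ} {Ω : Set (Euc d)} {ρ : ℝ → Measure (Euc d)}
    {q : ℝ → Fin d → SignedMeasure (Euc d)} (h : MemD Ω ρ q) (k : ℕ) (x : Euc d) :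
    ContinuousOn (fun t => gconc k (ρ t) x) (Icc (0:ℝ) 1) :=
  h.2.1 _ (continuous_kernel k x)

theorem measurableSet_adm {d : ℕ} {α : ℝ} (hα' : α < 1) {Ω : Set (Euc d)}
    {ρ : ℝ → Measure (Euc d)} {q : ℝ → Fin d → SignedMeasure (Euc d)} (h : MemD Ω ρ q)
    (k : ℕ) (ψ : Euc d → Euc d) :
    MeasurableSet {t | t ∈ Icc (0:ℝ) 1 ∧ Adm α Ω k ψ (ρ t)} := by
  refine (isClosed_forall_le (fun x => ?_) fun _ => continuousOn_const).measurableSet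
  exact continuousOn_const.mul
    (((continuousOn_gconc h k x).add continuousOn_const).rpow_const fun t _ =>
      Or.inr (by linarith))

/-- The pairing with a fixed field, on the times at which the field is admissible, is a localized
lower bound. At such times `ofReal (pairing ψ (qⁿₜ)) ≤ F(ρⁿₜ, qⁿₜ)` as soon as the smoothed masses
of `ρⁿₜ` are close to those of `ρₜ`; the exceptional set of times has vanishing measure. -/
theorem lscOn_pairing {d : ℕ} {α : ℝ} (hα : 0 < α) (hα' : α < 1) {Ω : Set (Euc d)}
    (hΩ : IsCompact Ω) {ρn : ℕ → ℝ → Measure (Euc d)}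
    {qn : ℕ → ℝ → Fin d → SignedMeasure (Euc d)} {ρ : ℝ → Measure (Euc d)}
    {q : ℝ → Fin d → SignedMeasure (Euc d)} (hn : ∀ n, MemD Ω (ρn n) (qn n))
    (h : MemD Ω ρ q) (hτ : TauConv α ρn qn ρ q)
    (k : ℕ) {ψ : Euc d → Euc d} (hψ : Continuous ψ) {p : ℝ → ℝ}
    (pm : Measurable p) (hp : ∀ᵐ t ∂(volume.restrict (Icc (0:ℝ) 1)), pairing ψ (q t) = p t) :
    LscOn ({t | t ∈ Icc (0:ℝ) 1 ∧ Adm α Ω k ψ (ρ t)}.indicator fun t => ENNReal.ofReal (p t))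
      (fun n t => Fc α (ρn n t) (qn n t)) := by
  intro A hA hA1
  set T : Set ℝ := {t | t ∈ Icc (0:ℝ) 1 ∧ Adm α Ω k ψ (ρ t)} with hT
  have mT : MeasurableSet T := measurableSet_adm hα' h k ψ
  set A' : Set ℝ := A ∩ T ∩ {t | 0 ≤ p t} with hA'
  have mA' : MeasurableSet A' := (hA.inter mT).inter (measurableSet_le measurable_const pm)
  have sA' : A' ⊆ Icc 0 1 := fun t ht => hA1 ht.1.1
  obtain ⟨C, C0, hC⟩ := exists_pairing_bound hα hα' hΩ hn hτ hψ
  set good : ℕ → Set ℝ := fun n => {t | t ∈ Icc (0:ℝ) 1 ∧ ∀ x ∈ Ω,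
    gconc k (ρn n t) x ≤ gconc k (ρ t) x + 1 / (k + 1)} with hgood
  have mgood : ∀ n, MeasurableSet (good n) := fun n =>
    (isClosed_forall_le (fun x => continuousOn_gconc (hn n) k x) fun x =>
      (continuousOn_gconc h k x).add continuousOn_const).measurableSet
  set bad : ℕ → Set ℝ := fun n => Icc 0 1 \ good n with hbad
  have mbad : ∀ n, MeasurableSet (bad n) := fun n => measurableSet_Icc.diff (mgood n)
  have badlim : Tendsto (fun n => ENNReal.ofReal C * volume (bad n)) atTop (nhds 0) := by
    have h1 : Tendsto (fun n => volume (bad n)) atTop (nhds (volume (∅ : Set ℝ))) := by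
      refine tendsto_measure_of_ae_tendsto_indicator atTop MeasurableSet.empty mbad
        (B := Icc (0:ℝ) 1) measurableSet_Icc (by simp) (Eventually.of_forall fun n => sdiff_subset)
        (Eventually.of_forall fun t => ?_)
      by_cases ht : t ∈ Icc (0:ℝ) 1
      · filter_upwards [eventually_gconc_le hα hα' hΩ hn h hτ k ht] with n hnn
        simp only [mem_empty_iff_false, iff_false]
        exact fun hb => hb.2 ⟨ht, hnn⟩
      · exact Eventually.of_forall fun n => by
          simp only [mem_empty_iff_false, iff_false]
          exact fun hb => ht hb.1
    have h2 := ENNReal.Tendsto.const_mul h1 (Or.inr (ENNReal.ofReal_ne_top (r := C)))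
    simpa using h2
  have pI : IntegrableOn p A' := by
    have := (integrable_congr hp).1 (integrableOn_pairing hΩ h hψ)
    exact IntegrableOn.mono_set this sA'
  have e1 : ∫⁻ t in A, T.indicator (fun t => ENNReal.ofReal (p t)) t =
      ENNReal.ofReal (∫ t in A', pairing ψ (q t)) := by
    have e2 : ∫ t in A', pairing ψ (q t) = ∫ t in A', p t :=
      integral_congr_ae (ae_restrict_of_ae_restrict_of_subset sA' hp)
    rw [e2, ofReal_integral_eq_lintegral_ofReal pI
      (ae_restrict_of_forall_mem mA' fun t ht => ht.2), setLIntegral_indicator mT,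
      inter_comm T A, ← lintegral_inter_add_sdiff _ (A ∩ T) (measurableSet_le measurable_const pm)]
    have e3 : ∫⁻ t in (A ∩ T) \ {t | 0 ≤ p t}, ENNReal.ofReal (p t) = 0 := by
      rw [setLIntegral_congr_fun (g := fun _ => 0)
        ((hA.inter mT).diff (measurableSet_le measurable_const pm))]
      · simp
      · exact fun t ht => ENNReal.ofReal_of_nonpos (not_le.1 ht.2).le
    rw [e3, add_zero]
  have lim : Tendsto (fun n => ENNReal.ofReal (∫ t in A', pairing ψ (qn n t))) atTop
      (nhds (ENNReal.ofReal (∫ t in A', pairing ψ (q t)))) :=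
    ENNReal.tendsto_ofReal (tendsto_setIntegral_pairing hα hα' hΩ hn h hτ hψ mA' sA')
  have bound : ∀ n, ENNReal.ofReal (∫ t in A', pairing ψ (qn n t)) ≤
      (∫⁻ t in A, Fc α (ρn n t) (qn n t)) + ENNReal.ofReal C * volume (bad n) := by
    intro n
    calc ENNReal.ofReal (∫ t in A', pairing ψ (qn n t))
        ≤ ∫⁻ t in A', ENNReal.ofReal (pairing ψ (qn n t)) := by
          rw [integral_eq_lintegral_pos_part_sub_lintegral_neg_part
            (IntegrableOn.mono_set (integrableOn_pairing hΩ (hn n) hψ) sA')]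
          exact (ENNReal.ofReal_le_ofReal (sub_le_self _ ENNReal.toReal_nonneg)).trans
            ENNReal.ofReal_toReal_le
      _ ≤ ∫⁻ t in A', (Fc α (ρn n t) (qn n t) +
            (bad n).indicator (fun _ => ENNReal.ofReal C) t) := by
          refine lintegral_mono_ae (ae_restrict_of_forall_mem mA' fun t ht => ?_)
          have ht1 := sA' ht
          have := ((hn n).1 t ht1).1
          by_cases hg : t ∈ good n
          · refine le_add_right ?_
            exact ofReal_pairing_le_Fc hα hΩ ((hn n).1 t ht1).2 ((hn n).2.2.1 t ht1) hψ
              (adm_mass hα hα' ht.1.2.2 hg.2)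
          · refine le_add_left ?_
            rw [indicator_of_mem (show t ∈ bad n from ⟨ht1, hg⟩)]
            exact ENNReal.ofReal_le_ofReal ((le_abs_self _).trans (hC n t ht1))
      _ = (∫⁻ t in A', Fc α (ρn n t) (qn n t)) +
            ∫⁻ t in A', (bad n).indicator (fun _ => ENNReal.ofReal C) t :=
          lintegral_add_right _ (measurable_const.indicator (mbad n))
      _ ≤ _ := by
          refine add_le_add (lintegral_mono_set fun t ht => ht.1.1) ?_
          refine (setLIntegral_le_lintegral _ _).trans ?_
          rw [lintegral_indicator_const (mbad n)]
  rw [e1, ← lim.liminf_eq]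
  refine (liminf_le_liminf (Eventually.of_forall bound)).trans (le_of_eq ?_)
  exact ENNReal.liminf_add_of_right_tendsto_zero badlim _

/-- for `Ω ⊂ ℝ^d` compact and `0 < α < 1`, the branched transport functional
`ℱ(ρ,q) = ∫₀¹ F(ρₜ,qₜ) dt` is lower semicontinuous along `τ`-converging sequences in `𝒟`:
if `(ρⁿ,qⁿ)` `τ`-converges to `(ρ,q)`, then `ℱ(ρ,q) ≤ liminf ℱ(ρⁿ,qⁿ)`. -/
theorem stmt_18 {d : ℕ} (hd : 0 < d) (α : ℝ) (hα : 0 < α) (hα' : α < 1)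
    (Ω : Set (Euc d)) (hΩ : IsCompact Ω)
    (ρn : ℕ → ℝ → Measure (Euc d)) (qn : ℕ → ℝ → Fin d → SignedMeasure (Euc d))
    (ρ : ℝ → Measure (Euc d)) (q : ℝ → Fin d → SignedMeasure (Euc d))
    (hn : ∀ n, MemD Ω (ρn n) (qn n)) (h : MemD Ω ρ q)
    (hτ : TauConv α ρn qn ρ q) :
    BigF α ρ q ≤ liminf (fun n => BigF α (ρn n) (qn n)) atTop := by
  set D := TopologicalSpace.denseSeq C(Euc d, Euc d)
  have hD : DenseRange D := TopologicalSpace.denseRange_denseSeq _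
  have am : ∀ j, AEMeasurable (fun t => pairing (D j) (q t)) (volume.restrict (Icc (0:ℝ) 1)) :=
    fun j => (integrableOn_pairing hΩ h (D j).continuous).1.aemeasurable
  have mT := fun k j => measurableSet_adm (α := α) hα' h k (D j)
  -- A single index runs through all pairs (field, smoothing scale).
  set H : ℕ → ℝ → ℝ≥0∞ := fun m =>
    {t | t ∈ Icc (0:ℝ) 1 ∧ Adm α Ω m.unpair.2 (D m.unpair.1) (ρ t)}.indicator
      fun t => ENNReal.ofReal ((am m.unpair.1).mk _ t) with hH
  have lsc : LscOn (⨆ m, H m) (fun n t => Fc α (ρn n t) (qn n t)) :=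
    LscOn.iSup
      (fun m => lscOn_pairing hα hα' hΩ hn h hτ m.unpair.2 (D m.unpair.1).continuous
        (am m.unpair.1).measurable_mk (am m.unpair.1).ae_eq_mk)
      fun m => (am m.unpair.1).measurable_mk.ennreal_ofReal.indicator (mT _ _)
  refine le_trans (lintegral_mono_ae ?_) (lsc _ measurableSet_Icc Subset.rfl)
  filter_upwards [ae_all_iff.2 fun j => (am j).ae_eq_mk, ae_restrict_mem measurableSet_Icc]
    with t hp ht
  have := (h.1 t ht).1
  refine Fc_le_of_adm hα hα' hΩ (h.2.2.1 t ht) hD fun j k hjk => ?_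
  rw [iSup_apply]
  refine le_iSup_of_le (Nat.pair j k) ?_
  simp only [hH, Nat.unpair_pair]
  rw [indicator_of_mem (show t ∈ {t | t ∈ Icc (0:ℝ) 1 ∧ Adm α Ω k (D j) (ρ t)} from ⟨ht, hjk⟩),
    ← hp j]
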